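/- arXiv:math/0306218 — 2 statements merged into one kernel-verified Lean document; each statement's English description precedes it below -/
import Mathlib

section
/- Assume Q_k = k + O(1), and let X, Y be sequences of positive reals with ln X_k = α_θ·ln k + o(1) and φ_j(X,Y) = Q_j for all j. For ε ≥ 0 define w_j := (Σ_{k≥1} P(X_k, Y_j)·k^{−ε})/(Σ_{k≥1} P(X_k, Y_j)). Then: (i) if 0 ≤ ε < α_θ + 1, then j^{ε}·w_j → S_ε/S_0 as j → ∞; (ii) if ε ≥ α_θ + 1, then j^{ε}·w_j → ∞ as j → ∞. -/
open Filter Asymptotics MeasureTheory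
open scoped ENNReal Topology

/-- `Theta θ E' E` is the argument of the complex number `E' + E·e^{iθ}`;
for `0 < θ < π` and `E', E > 0` it lies in `(0, θ)` and equals
`arctan (sin θ / (E'/E + cos θ))` with the branch taken in `(0, θ)`. -/
noncomputable def Theta (θ E' E : ℝ) : ℝ :=
  Complex.arg ((E' : ℂ) + (E : ℂ) * Complex.exp (θ * Complex.I))

/-- `phi θ X Y j = (1/π) · ∑_{k ≥ 1} Θ(X_k, Y_j) ∈ (0, ∞]`, where sequences are
indexed by `ℕ` and only the values at indices `k ≥ 1` are used. -/
noncomputable def phi (θ : ℝ) (X Y : ℕ → ℝ) (j : ℕ) : ℝ≥0∞ :=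
  ENNReal.ofReal (1 / Real.pi) * ∑' k : ℕ, ENNReal.ofReal (Theta θ (X (k + 1)) (Y j))

/-- `Pker θ E E' = E·E' / (E² + 2·cos θ·E·E' + E'²)`. -/
noncomputable def Pker (θ E E' : ℝ) : ℝ :=
  E * E' / (E ^ 2 + 2 * Real.cos θ * E * E' + E' ^ 2)

/-- The drift `D_α = (1/π) ∫_0^∞ Θ(s^α, 1) ds`. -/
noncomputable def Drift (θ α : ℝ) : ℝ :=
  (1 / Real.pi) * ∫ s in Set.Ioi (0 : ℝ), Theta θ (s ^ α) 1

/-- `S_ε = ∫_0^∞ s^{-ε} / (s^{α_θ} + 2 cos θ + s^{-α_θ}) ds` with `α_θ = 1 + θ/π`. -/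
noncomputable def Sfun (θ ε : ℝ) : ℝ :=
  ∫ s in Set.Ioi (0 : ℝ), s ^ (-ε) /
    (s ^ (1 + θ / Real.pi) + 2 * Real.cos θ + s ^ (-(1 + θ / Real.pi)))

/-!
Put `T = Y_j ^ (1 / α)` with `α = α_θ`. Since `X_k ∼ k ^ α`, the sums `∑ Θ(X_k, Y_j)` and
`∑ P(X_k, Y_j) k ^ (-ε)`, divided by the right power of `T`, are Riemann sums of mesh `1 / T` for
`∫ Θ(s ^ α, 1) ds` and `∫ P(s ^ α, 1) s ^ (-ε) ds`, dominated by a multiple of a minimum of two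
decreasing powers of `s`. The first integral is `π` times the drift, so `Q_j / T` tends to the
drift, and the second is `S_ε`; the ratio of the second for `ε` and for `0` is the limit of
`T ^ ε w_j`. When `ε ≥ α + 1` the terms with `k ≤ T` alone dominate a harmonic sum.

To replace `T` by `j` one needs the drift to be `1`. As `Θ(s ^ α, 1)` is the imaginary part of
`log (1 + z s ^ (-α))` at `z = e ^ (iθ)`, consider `L(z) = ∫ log (1 + z s ^ (-α)) ds`. Scaling
`s` gives `L(z) = z ^ (1 / α) L(1)` for `z > 0`, hence on the slit plane by the identity theorem.
Thus the drift is a constant times `sin (θ / α)`. When `θ → π`, `Θ(s ^ α, 1)` tends to `π` for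
`s < 1` and to `0` for `s > 1`, so the constant is `1 / sin (π / α)`, and
`sin (θ / α) = sin (π / α)` because `θ / α + π / α = π`.
-/

open Set Real

section RiemannSums

lemma hasSum_setIntegral_comp_floor_mul {E : Type*} [NormedAddCommGroup E] [NormedSpace ℝ E]
    [CompleteSpace E] {f : ℕ → E} {T : ℝ} (hT : 0 < T)
    (hf : IntegrableOn (fun s : ℝ => f ⌊T * s⌋₊) (Ioi 0)) :
    HasSum f (T • ∫ s in Ioi (0 : ℝ), f ⌊T * s⌋₊) := by
  have mem_Ico_iff {n : ℕ} {s : ℝ} : s ∈ Ico (n : ℝ) (n + 1) ↔ 0 ≤ s ∧ ⌊s⌋₊ = n :=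
    ⟨fun h => have h0 := n.cast_nonneg.trans h.1; ⟨h0, (Nat.floor_eq_iff h0).2 h⟩,
      fun h => (Nat.floor_eq_iff h.1).1 h.2⟩
  have iUnion_Ico : ⋃ n : ℕ, Ico (n : ℝ) (n + 1) = Ici 0 := by
    ext s
    simp only [mem_iUnion, mem_Ico_iff, exists_and_left, exists_eq', and_true, mem_Ici]
  have disjoint_Ico : Pairwise (Function.onFun Disjoint fun n : ℕ => Ico (n : ℝ) (n + 1)) :=
    fun m n hmn => Set.disjoint_left.2 fun s hm hn =>
      hmn ((mem_Ico_iff.1 hm).2.symm.trans (mem_Ico_iff.1 hn).2)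
  have integral_Ico (n : ℕ) : ∫ s in Ico (n : ℝ) (n + 1), f ⌊s⌋₊ = f n := by
    rw [setIntegral_congr_fun (g := fun _ => f n) measurableSet_Ico
      fun s hs => by simp only [(mem_Ico_iff.1 hs).2]]
    simp
  have integrable_floor : IntegrableOn (fun s : ℝ => f ⌊s⌋₊) (⋃ n : ℕ, Ico (n : ℝ) (n + 1)) := by
    rw [iUnion_Ico, integrableOn_Ici_iff_integrableOn_Ioi]
    simpa using (integrableOn_Ioi_comp_mul_left_iff (fun s : ℝ => f ⌊s⌋₊) 0 hT).1 hf
  have hasSum := hasSum_integral_iUnion (fun _ => measurableSet_Ico) disjoint_Ico integrable_floor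
  have scaling := integral_comp_mul_left_Ioi (fun s : ℝ => f ⌊s⌋₊) 0 hT
  simp only [mul_zero] at scaling
  rw [iUnion_Ico, integral_Ici_eq_integral_Ioi] at hasSum
  simpa only [scaling, smul_inv_smul₀ hT.ne', integral_Ico] using hasSum

variable {F : ℝ → ℕ → ℝ} {b : ℝ → ℝ}

lemma abs_comp_floor_le_of_antitoneOn (hb : AntitoneOn b (Ioi 0))
    (hF : ∀ T, 0 < T → ∀ k : ℕ, |F T k| ≤ b ((k + 1) / T)) {T s : ℝ} (hT : 0 < T) (hs : 0 < s) :
    |F T ⌊T * s⌋₊| ≤ b s := by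
  refine (hF T hT _).trans (hb hs (mem_Ioi.2 (by positivity)) ?_)
  rw [le_div_iff₀ hT, mul_comm]
  exact (Nat.lt_floor_add_one _).le

lemma integrableOn_comp_floor_of_antitoneOn (hb : AntitoneOn b (Ioi 0))
    (hbi : IntegrableOn b (Ioi 0)) (hF : ∀ T, 0 < T → ∀ k : ℕ, |F T k| ≤ b ((k + 1) / T))
    {T : ℝ} (hT : 0 < T) : IntegrableOn (fun s : ℝ => F T ⌊T * s⌋₊) (Ioi 0) :=
  hbi.mono' (measurable_from_nat.comp (measurable_const_mul T).nat_floor).aestronglyMeasurable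
    (ae_restrict_of_forall_mem measurableSet_Ioi fun _ hs =>
      abs_comp_floor_le_of_antitoneOn hb hF hT hs)

lemma summable_of_antitoneOn_of_integrableOn (hb : AntitoneOn b (Ioi 0))
    (hbi : IntegrableOn b (Ioi 0)) (hF : ∀ T, 0 < T → ∀ k : ℕ, |F T k| ≤ b ((k + 1) / T))
    {T : ℝ} (hT : 0 < T) : Summable (F T) :=
  (hasSum_setIntegral_comp_floor_mul hT
    (integrableOn_comp_floor_of_antitoneOn hb hbi hF hT)).summable

theorem tendsto_inv_mul_tsum_of_dominated {f : ℝ → ℝ} (hb : AntitoneOn b (Ioi 0))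
    (hbi : IntegrableOn b (Ioi 0)) (hF : ∀ T, 0 < T → ∀ k : ℕ, |F T k| ≤ b ((k + 1) / T))
    (hlim : ∀ s, 0 < s → Tendsto (fun T : ℝ => F T ⌊T * s⌋₊) atTop (𝓝 (f s))) :
    Tendsto (fun T => T⁻¹ * ∑' k, F T k) atTop (𝓝 (∫ s in Ioi 0, f s)) := by
  have tendsto_integral : Tendsto (fun T : ℝ => ∫ s in Ioi (0 : ℝ), F T ⌊T * s⌋₊) atTop
      (𝓝 (∫ s in Ioi 0, f s)) := by
    refine tendsto_integral_filter_of_dominated_convergence b (.of_forall fun T =>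
      (measurable_from_nat.comp (measurable_const_mul T).nat_floor).aestronglyMeasurable) ?_
      hbi (ae_restrict_of_forall_mem measurableSet_Ioi hlim)
    filter_upwards [eventually_gt_atTop 0] with T hT
    exact ae_restrict_of_forall_mem measurableSet_Ioi fun s hs =>
      abs_comp_floor_le_of_antitoneOn hb hF hT hs
  refine tendsto_integral.congr' ?_
  filter_upwards [eventually_gt_atTop 0] with T hT
  have hsum := hasSum_setIntegral_comp_floor_mul hT
    (integrableOn_comp_floor_of_antitoneOn hb hbi hF hT)
  rw [hsum.tsum_eq, smul_eq_mul, inv_mul_cancel_left₀ hT.ne']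

end RiemannSums

section PowerSequences

lemma integrableOn_min_rpow {β γ : ℝ} (hβ : β < 1) (hγ : 1 < γ) :
    IntegrableOn (fun s : ℝ => min (s ^ (-β)) (s ^ (-γ))) (Ioi 0) := by
  have norm_min (s : ℝ) (hs : 0 < s) :
      ‖min (s ^ (-β)) (s ^ (-γ))‖ = min (s ^ (-β)) (s ^ (-γ)) :=
    norm_of_nonneg (by positivity)
  rw [← Ioc_union_Ioi_eq_Ioi (zero_le_one' ℝ)]
  refine IntegrableOn.union ?_ ?_
  · have hint : IntegrableOn (fun s : ℝ => s ^ (-β)) (Ioc 0 1) :=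
      (intervalIntegrable_iff_integrableOn_Ioc_of_le zero_le_one).1
        (intervalIntegral.intervalIntegrable_rpow' (by linarith))
    exact hint.mono' (by fun_prop) (ae_restrict_of_forall_mem measurableSet_Ioc fun s hs =>
      (norm_min s hs.1).trans_le (min_le_left _ _))
  · exact (integrableOn_Ioi_rpow_of_lt (by linarith : -γ < -1) one_pos).mono' (by fun_prop)
      (ae_restrict_of_forall_mem measurableSet_Ioi fun s hs =>
        (norm_min s (one_pos.trans hs)).trans_le (min_le_right _ _))

lemma antitoneOn_min_rpow {β γ : ℝ} (hβ : 0 ≤ β) (hγ : 0 ≤ γ) :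
    AntitoneOn (fun s : ℝ => min (s ^ (-β)) (s ^ (-γ))) (Ioi 0) := fun _ hs _ _ hst =>
  min_le_min (rpow_le_rpow_of_nonpos hs hst (neg_nonpos.2 hβ))
    (rpow_le_rpow_of_nonpos hs hst (neg_nonpos.2 hγ))

lemma integrableOn_comp_rpow_mul_rpow {g : ℝ → ℝ} {C α a b ε : ℝ} (hg : ContinuousOn g (Ioi 0))
    (hga : ∀ x, 0 < x → |g x| ≤ C * x ^ (-a)) (hgb : ∀ x, 0 < x → |g x| ≤ C * x ^ (-b))
    (ha : α * a + ε < 1) (hb : 1 < α * b + ε) :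
    IntegrableOn (fun s => g (s ^ α) * s ^ (-ε)) (Ioi 0) := by
  have hcont : ContinuousOn (fun s : ℝ => g (s ^ α) * s ^ (-ε)) (Ioi 0) := by
    have hpow (p : ℝ) : ContinuousOn (fun s : ℝ => s ^ p) (Ioi 0) :=
      continuousOn_id.rpow_const fun s hs => .inl (ne_of_gt hs)
    exact (hg.comp (hpow α) fun s hs => rpow_pos_of_pos hs α).mul (hpow (-ε))
  have hC : 0 ≤ C := by simpa using (abs_nonneg _).trans (hga 1 one_pos)
  have hbound {s p : ℝ} (hs : 0 < s) (hp : |g (s ^ α)| ≤ C * (s ^ α) ^ (-p)) :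
      |g (s ^ α) * s ^ (-ε)| ≤ C * s ^ (-(α * p + ε)) := by
    have hpow : s ^ (-(α * p + ε)) = (s ^ α) ^ (-p) * s ^ (-ε) := by
      rw [← rpow_mul hs.le, ← rpow_add hs]
      ring_nf
    rw [abs_mul, abs_of_pos (rpow_pos_of_pos hs _), hpow, ← mul_assoc]
    gcongr
  refine ((integrableOn_min_rpow ha hb).const_mul C).mono'
    (hcont.aestronglyMeasurable measurableSet_Ioi)
    (ae_restrict_of_forall_mem measurableSet_Ioi fun s hs => ?_)
  rw [mul_min_of_nonneg _ _ hC]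
  have hsα := rpow_pos_of_pos hs α
  exact le_min (hbound hs (hga _ hsα)) (hbound hs (hgb _ hsα))

lemma isEquivalent_rpow_of_log_sub_isLittleO {α : ℝ} {X : ℕ → ℝ} (hXpos : ∀ k, 1 ≤ k → 0 < X k)
    (hX : (fun k : ℕ => log (X k) - α * log k) =o[atTop] fun _ : ℕ => (1 : ℝ)) :
    X ~[atTop] fun k : ℕ => (k : ℝ) ^ α := by
  have hpos : ∀ᶠ k : ℕ in atTop, 0 < (k : ℝ) ∧ 0 < X k := by
    filter_upwards [eventually_ge_atTop 1] with k hk using ⟨by exact_mod_cast hk, hXpos k hk⟩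
  rw [isEquivalent_iff_tendsto_one (hpos.mono fun k hk => (rpow_pos_of_pos hk.1 α).ne'),
    ← exp_zero]
  refine ((continuous_exp.tendsto 0).comp ((isLittleO_one_iff ℝ).1 hX)).congr' ?_
  filter_upwards [hpos] with k ⟨hk, hXk⟩
  rw [Function.comp_apply, Pi.div_apply, exp_sub, exp_log hXk, rpow_def_of_pos hk, mul_comm α]

variable {α : ℝ} {X : ℕ → ℝ}

lemma tendsto_div_rpow_of_isEquivalent (hX : X ~[atTop] fun k : ℕ => (k : ℝ) ^ α) :
    Tendsto (fun k : ℕ => X k / (k : ℝ) ^ α) atTop (𝓝 1) := by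
  refine (isEquivalent_iff_tendsto_one ?_).1 hX
  filter_upwards [eventually_ge_atTop 1] with k hk
  positivity

lemma exists_rpow_le_mul_rpow_of_isEquivalent (hXpos : ∀ k, 1 ≤ k → 0 < X k)
    (hX : X ~[atTop] fun k : ℕ => (k : ℝ) ^ α) (p : ℝ) :
    ∃ K, 0 < K ∧ ∀ k : ℕ, X (k + 1) ^ p ≤ K * ((k : ℝ) + 1) ^ (α * p) := by
  obtain ⟨B, hB⟩ := ((tendsto_div_rpow_of_isEquivalent hX).rpow_const
    (p := p) (.inl one_ne_zero)).bddAbove_range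
  refine ⟨max B 1, by positivity, fun k => ?_⟩
  have hk : 0 < (k : ℝ) + 1 := by positivity
  have hratio : (X (k + 1) / ((k : ℝ) + 1) ^ α) ^ p ≤ max B 1 :=
    (by exact_mod_cast hB ⟨k + 1, rfl⟩ : _ ≤ B).trans (le_max_left _ _)
  rwa [div_rpow (hXpos (k + 1) (by omega)).le (by positivity), ← rpow_mul hk.le,
    div_le_iff₀ (by positivity)] at hratio

lemma tendsto_floor_mul_add_one_div {s : ℝ} (hs : 0 ≤ s) :
    Tendsto (fun T : ℝ => ((⌊T * s⌋₊ : ℝ) + 1) / T) atTop (𝓝 s) := by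
  simpa only [add_zero, add_div, one_div, mul_comm s] using
    (tendsto_nat_floor_mul_div_atTop (R := ℝ) hs).add tendsto_inv_atTop_zero

lemma tendsto_comp_floor_div_rpow (hX : X ~[atTop] fun k : ℕ => (k : ℝ) ^ α) {s : ℝ} (hs : 0 < s) :
    Tendsto (fun T : ℝ => X (⌊T * s⌋₊ + 1) / T ^ α) atTop (𝓝 (s ^ α)) := by
  have hfloor : Tendsto (fun T : ℝ => ⌊T * s⌋₊ + 1) atTop atTop :=
    (tendsto_add_atTop_nat 1).comp (tendsto_nat_floor_atTop.comp (tendsto_id.atTop_mul_const hs))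
  have hprod := ((tendsto_div_rpow_of_isEquivalent hX).comp hfloor).mul
    ((tendsto_floor_mul_add_one_div hs.le).rpow_const (p := α) (.inl hs.ne'))
  rw [one_mul] at hprod
  refine hprod.congr' ?_
  filter_upwards [eventually_gt_atTop 0] with T hT
  rw [Function.comp_apply, div_rpow (by positivity) hT.le]
  push_cast
  exact div_mul_div_cancel₀ (by positivity)

variable {g : ℝ → ℝ} {C a b ε : ℝ}

lemma exists_abs_scaled_term_le (hXpos : ∀ k, 1 ≤ k → 0 < X k)
    (hX : X ~[atTop] fun k : ℕ => (k : ℝ) ^ α) (hg : ∀ x, 0 < x → |g x| ≤ C * x ^ (-a)) :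
    ∃ K, 0 < K ∧ ∀ T, 0 < T → ∀ k : ℕ, |g (X (k + 1) / T ^ α) * (((k : ℝ) + 1) / T) ^ (-ε)| ≤
      K * (((k : ℝ) + 1) / T) ^ (-(α * a + ε)) := by
  have hC : 0 ≤ C := by simpa using (abs_nonneg _).trans (hg 1 one_pos)
  obtain ⟨K, hK, hXK⟩ := exists_rpow_le_mul_rpow_of_isEquivalent hXpos hX (-a)
  refine ⟨(C + 1) * K, by positivity, fun T hT k => ?_⟩
  have hXk := hXpos (k + 1) (by omega)
  have hk : 0 < (k : ℝ) + 1 := by positivity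
  have hTα : 0 < T ^ α := by positivity
  set u := ((k : ℝ) + 1) / T with hu
  have hu0 : 0 < u := by positivity
  have hpow : (X (k + 1) / T ^ α) ^ (-a) ≤ K * u ^ (α * -a) := by
    rw [div_rpow hXk.le hTα.le, ← rpow_mul hT.le, hu, div_rpow hk.le hT.le, ← mul_div_assoc]
    gcongr
    exact hXK k
  calc |g (X (k + 1) / T ^ α) * u ^ (-ε)|
      = |g (X (k + 1) / T ^ α)| * u ^ (-ε) := by rw [abs_mul, abs_of_pos (rpow_pos_of_pos hu0 _)]
    _ ≤ C * (X (k + 1) / T ^ α) ^ (-a) * u ^ (-ε) := by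
      gcongr
      exact hg _ (by positivity)
    _ ≤ (C + 1) * (K * u ^ (α * -a)) * u ^ (-ε) := by
      gcongr
      linarith
    _ = (C + 1) * K * u ^ (-(α * a + ε)) := by
      rw [← mul_assoc, mul_assoc _ (u ^ _), ← rpow_add hu0]
      ring_nf

lemma exists_abs_scaled_term_le_min (hXpos : ∀ k, 1 ≤ k → 0 < X k)
    (hX : X ~[atTop] fun k : ℕ => (k : ℝ) ^ α) (hga : ∀ x, 0 < x → |g x| ≤ C * x ^ (-a))
    (hgb : ∀ x, 0 < x → |g x| ≤ C * x ^ (-b)) :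
    ∃ K, 0 < K ∧ ∀ T, 0 < T → ∀ k : ℕ, |g (X (k + 1) / T ^ α) * (((k : ℝ) + 1) / T) ^ (-ε)| ≤
      K * min ((((k : ℝ) + 1) / T) ^ (-(α * a + ε))) ((((k : ℝ) + 1) / T) ^ (-(α * b + ε))) := by
  obtain ⟨Ka, hKa, ha⟩ := exists_abs_scaled_term_le (ε := ε) hXpos hX hga
  obtain ⟨Kb, -, hb⟩ := exists_abs_scaled_term_le (ε := ε) hXpos hX hgb
  refine ⟨max Ka Kb, by positivity, fun T hT k => ?_⟩
  rw [mul_min_of_nonneg _ _ (by positivity)]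
  refine le_min ((ha T hT k).trans ?_) ((hb T hT k).trans ?_)
  · gcongr; exact le_max_left _ _
  · gcongr; exact le_max_right _ _

lemma summable_scaled_terms (hXpos : ∀ k, 1 ≤ k → 0 < X k)
    (hX : X ~[atTop] fun k : ℕ => (k : ℝ) ^ α) (hga : ∀ x, 0 < x → |g x| ≤ C * x ^ (-a))
    (hgb : ∀ x, 0 < x → |g x| ≤ C * x ^ (-b)) (ha0 : 0 ≤ α * a + ε) (ha1 : α * a + ε < 1)
    (hb : 1 < α * b + ε) {T : ℝ} (hT : 0 < T) :
    Summable fun k : ℕ => g (X (k + 1) / T ^ α) * (((k : ℝ) + 1) / T) ^ (-ε) := by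
  obtain ⟨K, hK, hbound⟩ := exists_abs_scaled_term_le_min (ε := ε) hXpos hX hga hgb
  exact summable_of_antitoneOn_of_integrableOn
    (F := fun T k => g (X (k + 1) / T ^ α) * (((k : ℝ) + 1) / T) ^ (-ε))
    ((monotone_mul_left_of_nonneg hK.le).comp_antitoneOn (antitoneOn_min_rpow ha0 (by linarith)))
    ((integrableOn_min_rpow ha1 hb).const_mul K) hbound hT

theorem tendsto_inv_mul_tsum_scaled_terms (hXpos : ∀ k, 1 ≤ k → 0 < X k)
    (hX : X ~[atTop] fun k : ℕ => (k : ℝ) ^ α) (hg : ContinuousOn g (Ioi 0))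
    (hga : ∀ x, 0 < x → |g x| ≤ C * x ^ (-a)) (hgb : ∀ x, 0 < x → |g x| ≤ C * x ^ (-b))
    (ha0 : 0 ≤ α * a + ε) (ha1 : α * a + ε < 1) (hb : 1 < α * b + ε) :
    Tendsto (fun T : ℝ => T⁻¹ * ∑' k : ℕ, g (X (k + 1) / T ^ α) * (((k : ℝ) + 1) / T) ^ (-ε))
      atTop (𝓝 (∫ s in Ioi 0, g (s ^ α) * s ^ (-ε))) := by
  obtain ⟨K, hK, hbound⟩ := exists_abs_scaled_term_le_min (ε := ε) hXpos hX hga hgb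
  refine tendsto_inv_mul_tsum_of_dominated
    ((monotone_mul_left_of_nonneg hK.le).comp_antitoneOn (antitoneOn_min_rpow ha0 (by linarith)))
    ((integrableOn_min_rpow ha1 hb).const_mul K) hbound fun s hs => ?_
  have hgs : ContinuousAt g (s ^ α) := hg.continuousAt (Ioi_mem_nhds (rpow_pos_of_pos hs α))
  exact (hgs.tendsto.comp (tendsto_comp_floor_div_rpow hX hs)).mul
    ((tendsto_floor_mul_add_one_div hs.le).rpow_const (.inl hs.ne'))

end PowerSequences

section Theta

variable {θ x y : ℝ}

lemma Theta_scale (θ x : ℝ) (hy : 0 < y) : Theta θ x y = Theta θ (x / y) 1 := by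
  have hfactor : (x : ℂ) + y * Complex.exp (θ * Complex.I) =
      y * (((x / y : ℝ) : ℂ) + (1 : ℝ) * Complex.exp (θ * Complex.I)) := by
    have : (y : ℂ) ≠ 0 := by exact_mod_cast hy.ne'
    push_cast
    field_simp
  rw [Theta, Theta, hfactor, Complex.arg_real_mul _ hy]

lemma Theta_one_right (θ x : ℝ) :
    Theta θ x 1 = Complex.arg ⟨x + cos θ, sin θ⟩ := by
  have hpolar : (x : ℂ) + (1 : ℝ) * Complex.exp (θ * Complex.I) = ⟨x + cos θ, sin θ⟩ := by
    apply Complex.ext <;> simp [Complex.exp_ofReal_mul_I_re, Complex.exp_ofReal_mul_I_im]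
  rw [Theta, hpolar]

lemma Theta_le_pi (θ x y : ℝ) : Theta θ x y ≤ π :=
  Complex.arg_le_pi _

lemma Theta_one_nonneg (hθ : 0 < θ) (hθπ : θ < π) (x : ℝ) : 0 ≤ Theta θ x 1 := by
  rw [Theta_one_right, Complex.arg_nonneg_iff]
  exact (sin_pos_of_pos_of_lt_pi hθ hθπ).le

lemma continuous_Theta_one (hθ : 0 < θ) (hθπ : θ < π) : Continuous fun x => Theta θ x 1 := by
  have hcurve : Continuous fun x : ℝ => (⟨x + cos θ, sin θ⟩ : ℂ) :=
    Complex.equivRealProdCLM.symm.continuous.comp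
      (by fun_prop : Continuous fun x : ℝ => (x + cos θ, sin θ))
  simp only [Theta_one_right]
  exact continuous_iff_continuousAt.2 fun x =>
    (Complex.continuousAt_arg (Complex.mem_slitPlane_iff.2
      (.inr (sin_pos_of_pos_of_lt_pi hθ hθπ).ne'))).comp hcurve.continuousAt

-- The sine rule in the triangle with vertices `0`, `x` and `x + e^{iθ}`.
lemma mul_sin_Theta_one (θ x : ℝ) : x * sin (Theta θ x 1) = sin (θ - Theta θ x 1) := by
  rw [Theta_one_right, sin_sub]
  set w : ℂ := ⟨x + cos θ, sin θ⟩
  have hcos : ‖w‖ * cos w.arg = x + cos θ := Complex.norm_mul_cos_arg w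
  have hsin : ‖w‖ * sin w.arg = sin θ := Complex.norm_mul_sin_arg w
  rcases eq_or_ne w 0 with h0 | h0
  · simp [h0, ← hsin]
  · refine mul_left_cancel₀ (norm_ne_zero_iff.2 h0) ?_
    linear_combination (x + cos θ) * hsin - sin θ * hcos

lemma Theta_one_le_pi_div (hθ : 0 < θ) (hθπ : θ < π) (hx : 0 < x) : Theta θ x 1 ≤ π / x := by
  rcases le_total x 1 with hx1 | hx1
  · exact (Theta_le_pi θ x 1).trans (le_div_self pi_pos.le hx hx1)
  · have hle : Theta θ x 1 ≤ π / 2 := by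
      rw [Theta_one_right]
      refine (le_abs_self _).trans (Complex.abs_arg_le_pi_div_two_iff.2 ?_)
      change 0 ≤ x + cos θ
      linarith [neg_one_le_cos θ]
    have hjordan := mul_le_sin (Theta_one_nonneg hθ hθπ x) hle
    have hsin : x * sin (Theta θ x 1) ≤ 1 := (mul_sin_Theta_one θ x).trans_le (sin_le_one _)
    rw [le_div_iff₀' hx]
    calc x * Theta θ x 1 = π / 2 * (x * (2 / π * Theta θ x 1)) := by field_simp
      _ ≤ π / 2 * 1 := by gcongr; exact (by gcongr : _ ≤ x * sin (Theta θ x 1)).trans hsin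
      _ ≤ π := by linarith [pi_pos]

lemma abs_Theta_one_le_rpow_zero (hθ : 0 < θ) (hθπ : θ < π) (x : ℝ) :
    |Theta θ x 1| ≤ π * x ^ (-0 : ℝ) := by
  simpa [abs_of_nonneg (Theta_one_nonneg hθ hθπ x)] using Theta_le_pi θ x 1

lemma abs_Theta_one_le_rpow_neg_one (hθ : 0 < θ) (hθπ : θ < π) (hx : 0 < x) :
    |Theta θ x 1| ≤ π * x ^ (-1 : ℝ) := by
  rw [abs_of_nonneg (Theta_one_nonneg hθ hθπ x), rpow_neg_one, ← div_eq_mul_inv]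
  exact Theta_one_le_pi_div hθ hθπ hx

end Theta

section LogIntegral

open Complex (slitPlane)

lemma one_add_mul_ofReal_mem_slitPlane {z : ℂ} (hz : z ∈ slitPlane) {x : ℝ} (hx : 0 ≤ x) :
    1 + z * x ∈ slitPlane := by
  rw [Complex.mem_slitPlane_iff] at hz ⊢
  rcases hx.eq_or_lt with rfl | hx
  · simp
  · refine hz.imp (fun hre => ?_) fun him => ?_
    · simpa using by positivity
    · simpa using ⟨him, hx.ne'⟩

-- `‖1 + z x‖ / (1 + x)` is the distance from `0` to a point of the segment `[1, z]`.
lemma exists_mul_one_add_le_norm_one_add_mul {z : ℂ} (hz : z ∈ slitPlane) :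
    ∃ m, 0 < m ∧ ∀ᶠ w : ℂ in 𝓝 z, ∀ x : ℝ, 0 ≤ x → m * (1 + x) ≤ ‖1 + w * x‖ := by
  set d := Metric.infDist (0 : ℂ) (segment ℝ 1 z) with hd
  have hd_pos : 0 < d := by
    have hclosed : IsClosed (segment ℝ (1 : ℂ) z) := by
      rw [← convexHull_pair (𝕜 := ℝ)]
      exact (Set.toFinite {1, z}).isClosed_convexHull ℝ
    refine (hclosed.notMem_iff_infDist_pos ⟨1, left_mem_segment ℝ 1 z⟩).1 fun h0 => ?_
    exact Complex.slitPlane_ne_zero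
      (Complex.starConvex_one_slitPlane.segment_subset hz h0) rfl
  have hdist {x : ℝ} (hx : 0 ≤ x) : d * (1 + x) ≤ ‖1 + z * x‖ := by
    have hx1 : (0 : ℝ) < 1 + x := by positivity
    have hmem : (1 + x)⁻¹ • (1 + z * x) ∈ segment ℝ 1 z :=
      ⟨(1 + x)⁻¹, x / (1 + x), by positivity, by positivity, by field_simp, by
        simp only [Complex.real_smul]; push_cast; ring⟩
    have := Metric.infDist_le_dist_of_mem (x := 0) hmem
    rwa [dist_zero_left, norm_smul, norm_of_nonneg (by positivity), ← hd, inv_mul_eq_div,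
      le_div_iff₀ hx1] at this
  refine ⟨d / 2, by positivity, ?_⟩
  filter_upwards [Metric.ball_mem_nhds z (half_pos hd_pos)] with w hw x hx
  have hsplit : ‖1 + z * x‖ ≤ ‖1 + w * x‖ + d / 2 * x := calc
    ‖1 + z * x‖ = ‖1 + w * x - (w - z) * x‖ := by ring_nf
    _ ≤ ‖1 + w * x‖ + ‖w - z‖ * x := by
      simpa [abs_of_nonneg hx] using norm_sub_le (1 + w * x) ((w - z) * x)
    _ ≤ ‖1 + w * x‖ + d / 2 * x := by
      gcongr
      exact (mem_ball_iff_norm.1 hw).le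
  linarith [hdist hx]

lemma exists_norm_clog_one_add_mul_le {z : ℂ} (hz : z ∈ slitPlane) :
    ∃ C, ∀ x : ℝ, 0 ≤ x → ‖Complex.log (1 + z * x)‖ ≤ C * log (1 + x) := by
  obtain ⟨m, hm, hbound⟩ := exists_mul_one_add_le_norm_one_add_mul hz
  refine ⟨‖z‖ / m, fun x hx => ?_⟩
  have hf {t : ℝ} (ht : 0 ≤ t) :
      HasDerivAt (fun t : ℝ => Complex.log (1 + z * t)) (z / (1 + z * t)) t := by
    simpa using ((((hasDerivAt_id (t : ℂ)).const_mul z).const_add 1).clog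
      (one_add_mul_ofReal_mem_slitPlane hz ht)).comp_ofReal
  have hB {t : ℝ} (ht : 0 ≤ t) :
      HasDerivAt (fun t : ℝ => ‖z‖ / m * log (1 + t)) (‖z‖ / m * (1 / (1 + t))) t :=
    (((hasDerivAt_id t).const_add 1).log (by simp only [id]; positivity)).const_mul _
  refine image_norm_le_of_norm_deriv_right_le_deriv_boundary' (a := 0) (b := x)
    (fun t ht => (hf ht.1).continuousAt.continuousWithinAt)
    (fun t ht => (hf ht.1).hasDerivWithinAt) (by simp)
    (fun t ht => (hB ht.1).continuousAt.continuousWithinAt)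
    (fun t ht => (hB ht.1).hasDerivWithinAt) (fun t ht => ?_) ⟨hx, le_rfl⟩
  have ht0 : 0 < 1 + t := by linarith [ht.1]
  have hden := hbound.self_of_nhds t ht.1
  rw [norm_div, ← div_eq_mul_one_div, div_div]
  gcongr

lemma log_one_add_le_rpow_div {x p : ℝ} (hx : 0 ≤ x) (hp : 0 < p) (hp1 : p ≤ 1) :
    log (1 + x) ≤ x ^ p / p := by
  rw [le_div_iff₀' hp, ← log_rpow (by positivity)]
  calc log ((1 + x) ^ p) ≤ (1 + x) ^ p - 1 := log_le_sub_one_of_pos (by positivity)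
    _ ≤ x ^ p := by
      linarith [(rpow_add_le_add_rpow zero_le_one hx hp.le hp1).trans_eq (by rw [one_rpow])]

variable {α : ℝ}

lemma integrableOn_log_one_add_rpow (hα : 1 < α) :
    IntegrableOn (fun s : ℝ => log (1 + s ^ (-α))) (Ioi 0) := by
  refine ((integrableOn_min_rpow (by norm_num : (1 / 2 : ℝ) < 1) hα).const_mul (2 * α)).mono'
    (by fun_prop : Measurable _).aestronglyMeasurable
    (ae_restrict_of_forall_mem measurableSet_Ioi fun s hs => ?_)
  have hs0 : 0 < s := hs
  have hx : 0 ≤ s ^ (-α) := by positivity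
  have hsqrt := log_one_add_le_rpow_div hx (p := 1 / (2 * α)) (by positivity)
    ((div_le_one (by positivity)).2 (by linarith))
  have hlin := log_one_add_le_rpow_div hx one_pos le_rfl
  rw [norm_of_nonneg (log_nonneg (by linarith)), mul_min_of_nonneg _ _ (by positivity)]
  refine le_min (hsqrt.trans_eq ?_) (hlin.trans ?_)
  · rw [← rpow_mul hs0.le]
    field_simp
  · rw [rpow_one, div_one]
    exact le_mul_of_one_le_left hx (by linarith)

lemma integrableOn_clog_one_add_mul_rpow (hα : 1 < α) {z : ℂ} (hz : z ∈ slitPlane) :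
    IntegrableOn (fun s : ℝ => Complex.log (1 + z * (s ^ (-α) : ℝ))) (Ioi 0) := by
  obtain ⟨C, hC⟩ := exists_norm_clog_one_add_mul_le hz
  exact ((integrableOn_log_one_add_rpow hα).const_mul C).mono'
    (by fun_prop : Measurable _).aestronglyMeasurable
    (ae_restrict_of_forall_mem measurableSet_Ioi fun s hs => hC _ (rpow_nonneg (le_of_lt hs) _))

/-- The integral `∫₀^∞ log (1 + z s^{-α}) ds`, whose imaginary part at `z = e^{iθ}` is
`∫₀^∞ Θ(s^α, 1) ds`; it is holomorphic on the slit plane when `1 < α`. -/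
noncomputable def logIntegral (α : ℝ) (z : ℂ) : ℂ :=
  ∫ s in Ioi (0 : ℝ), Complex.log (1 + z * (s ^ (-α) : ℝ))

lemma differentiableOn_logIntegral (hα : 1 < α) :
    DifferentiableOn ℂ (logIntegral α) slitPlane := by
  intro z hz
  obtain ⟨m, hm, hbound⟩ := exists_mul_one_add_le_norm_one_add_mul hz
  have hnhds := hbound.and (Complex.isOpen_slitPlane.mem_nhds hz)
  refine (hasDerivAt_integral_of_dominated_loc_of_deriv_le (μ := volume.restrict (Ioi 0))
    (F := fun w s => Complex.log (1 + w * (s ^ (-α) : ℝ)))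
    (F' := fun w s => (s ^ (-α) : ℝ) / (1 + w * (s ^ (-α) : ℝ)))
    (bound := fun s => m⁻¹ * min (s ^ (-0 : ℝ)) (s ^ (-α))) hnhds
    (.of_forall fun w => (by fun_prop : Measurable _).aestronglyMeasurable)
    (integrableOn_clog_one_add_mul_rpow hα hz)
    (by fun_prop : Measurable _).aestronglyMeasurable
    (ae_restrict_of_forall_mem measurableSet_Ioi fun s hs w hw => ?_)
    ((integrableOn_min_rpow one_pos hα).const_mul _)
    (ae_restrict_of_forall_mem measurableSet_Ioi fun s hs w hw => ?_)).2
    |>.differentiableAt.differentiableWithinAt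
  all_goals have hx : 0 < s ^ (-α) := rpow_pos_of_pos hs _
  · rw [norm_div, Complex.norm_real, norm_of_nonneg hx.le, neg_zero, rpow_zero,
      mul_min_of_nonneg _ _ (by positivity)]
    have hle : s ^ (-α) / ‖1 + w * (s ^ (-α) : ℝ)‖ ≤ s ^ (-α) / (m * (1 + s ^ (-α))) := by
      gcongr
      exact hw.1 _ hx.le
    refine le_min (hle.trans ?_) (hle.trans ?_) <;>
    · rw [div_le_iff₀ (by positivity)]
      field_simp
      linarith
  · simpa using (((hasDerivAt_id w).mul_const _).const_add 1).clog
      (one_add_mul_ofReal_mem_slitPlane hw.2 hx.le)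

lemma logIntegral_ofReal (hα : 0 < α) {r : ℝ} (hr : 0 < r) :
    logIntegral α r = (r : ℂ) ^ (1 / α : ℂ) * logIntegral α 1 := by
  have hb : 0 < r ^ (1 / α) := by positivity
  have hscale (t : ℝ) (ht : 0 < t) : r * (r ^ (1 / α) * t) ^ (-α) = t ^ (-α) := by
    rw [mul_rpow hb.le ht.le, ← rpow_mul hr.le, mul_neg, one_div_mul_cancel hα.ne', rpow_neg_one,
      mul_inv_cancel_left₀ hr.ne']
  have hsubst := integral_comp_mul_left_Ioi
    (fun s => Complex.log (1 + (r : ℂ) * (s ^ (-α) : ℝ))) 0 hb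
  rw [mul_zero, setIntegral_congr_fun (g := fun t => Complex.log (1 + 1 * (t ^ (-α) : ℝ)))
    measurableSet_Ioi fun t ht => by
      simp only [one_mul, ← hscale t ht, Complex.ofReal_mul]] at hsubst
  have hcpow : (r : ℂ) ^ (1 / α : ℂ) = (r ^ (1 / α) : ℝ) := by
    rw [Complex.ofReal_cpow hr.le]
    push_cast
    rfl
  rw [hcpow, ← Complex.real_smul, logIntegral, logIntegral, hsubst, smul_inv_smul₀ hb.ne']

lemma logIntegral_eq_cpow_mul (hα : 1 < α) {z : ℂ} (hz : z ∈ slitPlane) :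
    logIntegral α z = z ^ (1 / α : ℂ) * logIntegral α 1 := by
  have hL : AnalyticOnNhd ℂ (logIntegral α) slitPlane :=
    (differentiableOn_logIntegral hα).analyticOnNhd Complex.isOpen_slitPlane
  have hcpow : AnalyticOnNhd ℂ (fun z : ℂ => z ^ (1 / α : ℂ) * logIntegral α 1) slitPlane :=
    DifferentiableOn.analyticOnNhd (fun w hw =>
      ((differentiableAt_id.cpow_const hw).mul_const _).differentiableWithinAt)
      Complex.isOpen_slitPlane
  have hreal : Tendsto ((↑) : ℝ → ℂ) (𝓝[≠] 1) (𝓝[≠] 1) :=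
    Complex.continuous_ofReal.continuousWithinAt.tendsto_nhdsWithin fun x hx => by simpa using hx
  refine hL.eqOn_of_preconnected_of_frequently_eq hcpow
    (Complex.starConvex_one_slitPlane.isPathConnected
      Complex.one_mem_slitPlane).isConnected.isPreconnected Complex.one_mem_slitPlane
    (hreal.frequently (Eventually.frequently ?_)) hz
  filter_upwards [nhdsWithin_le_nhds (Ioi_mem_nhds one_pos)] with r hr
  exact logIntegral_ofReal (one_pos.trans hα) hr

lemma logIntegral_one (α : ℝ) :
    logIntegral α 1 = (∫ s in Ioi (0 : ℝ), log (1 + s ^ (-α)) : ℝ) := by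
  rw [logIntegral, ← integral_complex_ofReal]
  refine setIntegral_congr_fun measurableSet_Ioi fun s hs => ?_
  have := rpow_pos_of_pos hs (-α)
  simp [Complex.ofReal_log (by positivity : 0 ≤ 1 + s ^ (-α))]

end LogIntegral

section Drift

variable {θ α : ℝ}

lemma Theta_one_eq_im_clog (θ : ℝ) {x : ℝ} (hx : 0 < x) :
    Theta θ x 1 = (Complex.log (1 + Complex.exp (θ * Complex.I) * (x⁻¹ : ℝ))).im := by
  have hfactor : (x : ℂ) + (1 : ℝ) * Complex.exp (θ * Complex.I) =
      x * (1 + Complex.exp (θ * Complex.I) * (x⁻¹ : ℝ)) := by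
    have : (x : ℂ) ≠ 0 := by exact_mod_cast hx.ne'
    push_cast
    field_simp
  rw [Theta, hfactor, Complex.arg_real_mul _ hx, Complex.log_im]

lemma integral_Theta_rpow (hθ : 0 < θ) (hθπ : θ < π) (hα : 1 < α) :
    ∫ s in Ioi (0 : ℝ), Theta θ (s ^ α) 1 =
      sin (θ / α) * ∫ s in Ioi (0 : ℝ), log (1 + s ^ (-α)) := by
  have hz : Complex.exp (θ * Complex.I) ∈ Complex.slitPlane := by
    rw [Complex.mem_slitPlane_iff, Complex.exp_ofReal_mul_I_im]
    exact .inr (sin_pos_of_pos_of_lt_pi hθ hθπ).ne'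
  have hroot : Complex.exp (θ * Complex.I) ^ (1 / α : ℂ) =
      Complex.exp ((θ / α : ℝ) * Complex.I) := by
    rw [Complex.cpow_def_of_ne_zero (Complex.exp_ne_zero _), Complex.log_exp (by simp; linarith)
      (by simp; linarith)]
    push_cast
    ring_nf
  calc ∫ s in Ioi (0 : ℝ), Theta θ (s ^ α) 1
      = (logIntegral α (Complex.exp (θ * Complex.I))).im := by
        rw [logIntegral, ← RCLike.im_eq_complex_im,
          ← integral_im (integrableOn_clog_one_add_mul_rpow hα hz)]
        refine setIntegral_congr_fun measurableSet_Ioi fun s hs => ?_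
        simp only [Theta_one_eq_im_clog θ (rpow_pos_of_pos hs α), rpow_neg (le_of_lt hs),
          RCLike.im_eq_complex_im]
    _ = sin (θ / α) * ∫ s in Ioi (0 : ℝ), log (1 + s ^ (-α)) := by
        rw [logIntegral_eq_cpow_mul hα hz, hroot, logIntegral_one, Complex.im_mul_ofReal,
          Complex.exp_ofReal_mul_I_im]

lemma tendsto_add_exp_mul_I_pi (x : ℝ) :
    Tendsto (fun θ : ℝ => (x : ℂ) + (1 : ℝ) * Complex.exp (θ * Complex.I)) (𝓝 π)
      (𝓝 ((x - 1 : ℝ) : ℂ)) := by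
  have hcurve : Continuous fun θ : ℝ => (x : ℂ) + (1 : ℝ) * Complex.exp (θ * Complex.I) := by
    fun_prop
  simpa [Complex.exp_pi_mul_I, ← sub_eq_add_neg] using hcurve.tendsto π

lemma tendsto_Theta_one_pi_of_lt_one {x : ℝ} (hx : x < 1) :
    Tendsto (fun θ => Theta θ x 1) (𝓝[<] π) (𝓝 π) := by
  have harg := Complex.continuousWithinAt_arg_of_re_neg_of_im_zero (z := (x - 1 : ℝ))
    (sub_neg.2 hx) (Complex.ofReal_im _)
  rw [ContinuousWithinAt, Complex.arg_ofReal_of_neg (sub_neg.2 hx)] at harg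
  refine harg.comp (tendsto_nhdsWithin_iff.2
    ⟨(tendsto_add_exp_mul_I_pi x).mono_left nhdsWithin_le_nhds, ?_⟩)
  filter_upwards [Ioo_mem_nhdsLT pi_pos] with θ hθ
  simpa [Complex.exp_ofReal_mul_I_im] using (sin_pos_of_pos_of_lt_pi hθ.1 hθ.2).le

lemma tendsto_Theta_one_pi_of_one_lt {x : ℝ} (hx : 1 < x) :
    Tendsto (fun θ => Theta θ x 1) (𝓝[<] π) (𝓝 0) := by
  have harg := Complex.continuousAt_arg (Complex.ofReal_mem_slitPlane.2 (sub_pos.2 hx))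
  rw [ContinuousAt, Complex.arg_ofReal_of_nonneg (sub_pos.2 hx).le] at harg
  exact harg.comp ((tendsto_add_exp_mul_I_pi x).mono_left nhdsWithin_le_nhds)

lemma tendsto_integral_Theta_rpow_pi (hα : 1 < α) :
    Tendsto (fun θ => ∫ s in Ioi (0 : ℝ), Theta θ (s ^ α) 1) (𝓝[<] π) (𝓝 π) := by
  have hlim : ∫ s in Ioi (0 : ℝ), (Iio 1).indicator (fun _ => π) s = π := by
    simp [setIntegral_indicator measurableSet_Iio, Ioi_inter_Iio]
  have hθ : ∀ᶠ θ in 𝓝[<] π, 0 < θ ∧ θ < π := Ioo_mem_nhdsLT pi_pos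
  suffices Tendsto (fun θ => ∫ s in Ioi (0 : ℝ), Theta θ (s ^ α) 1) (𝓝[<] π)
      (𝓝 (∫ s in Ioi (0 : ℝ), (Iio 1).indicator (fun _ => π) s)) by rwa [hlim] at this
  refine tendsto_integral_filter_of_dominated_convergence
    (fun s => π * min (s ^ (-0 : ℝ)) (s ^ (-α))) ?_ ?_
    ((integrableOn_min_rpow one_pos hα).const_mul π) ?_
  · filter_upwards [hθ] with θ ⟨hθ, hθπ⟩
    exact ((continuous_Theta_one hθ hθπ).measurable.comp
      (measurable_id.pow_const α)).aestronglyMeasurable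
  · filter_upwards [hθ] with θ ⟨hθ, hθπ⟩
    refine ae_restrict_of_forall_mem measurableSet_Ioi fun s hs => ?_
    have hsα : 0 < s ^ α := rpow_pos_of_pos hs α
    have hone := abs_Theta_one_le_rpow_neg_one hθ hθπ hsα
    rw [rpow_neg_one, ← rpow_neg (le_of_lt hs)] at hone
    rw [mul_min_of_nonneg _ _ pi_pos.le]
    exact le_min (by simpa using abs_Theta_one_le_rpow_zero hθ hθπ (s ^ α)) hone
  · filter_upwards [ae_restrict_of_ae (Measure.ae_ne volume 1),
      ae_restrict_mem measurableSet_Ioi] with s hs hs0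
    have hs0' : 0 < s := hs0
    rcases hs.lt_or_gt with h | h
    · rw [indicator_of_mem (mem_Iio.2 h)]
      exact tendsto_Theta_one_pi_of_lt_one (rpow_lt_one hs0'.le h (by positivity))
    · rw [indicator_of_notMem (by simpa using h.le)]
      exact tendsto_Theta_one_pi_of_one_lt (one_lt_rpow h (by positivity))

lemma integral_log_one_add_rpow (hα : 1 < α) :
    sin (π / α) * ∫ s in Ioi (0 : ℝ), log (1 + s ^ (-α)) = π := by
  refine tendsto_nhds_unique ?_ (tendsto_integral_Theta_rpow_pi hα)
  have hcont : Continuous fun θ => sin (θ / α) * ∫ s in Ioi (0 : ℝ), log (1 + s ^ (-α)) := by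
    fun_prop
  refine (hcont.continuousWithinAt (s := Iio π) (x := π)).tendsto.congr' ?_
  filter_upwards [Ioo_mem_nhdsLT pi_pos] with θ hθ
  exact (integral_Theta_rpow hθ.1 hθ.2 hα).symm

theorem Drift_eq_sin_div_sin (hθ : 0 < θ) (hθπ : θ < π) (hα : 1 < α) :
    Drift θ α = sin (θ / α) / sin (π / α) := by
  have hsin : sin (π / α) ≠ 0 :=
    (sin_pos_of_pos_of_lt_pi (by positivity) (div_lt_self pi_pos hα)).ne'
  rw [Drift, integral_Theta_rpow hθ hθπ hα, eq_div_iff hsin, mul_assoc, mul_assoc,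
    mul_comm _ (sin (π / α)), integral_log_one_add_rpow hα]
  field_simp

lemma Drift_pos (hθ : 0 < θ) (hθπ : θ < π) (hα : 1 < α) : 0 < Drift θ α := by
  rw [Drift_eq_sin_div_sin hθ hθπ hα]
  exact div_pos (sin_pos_of_pos_of_lt_pi (by positivity) ((div_lt_self hθ hα).trans hθπ))
    (sin_pos_of_pos_of_lt_pi (by positivity) (div_lt_self pi_pos hα))

theorem Drift_one_add_div_pi (hθ : 0 < θ) (hθπ : θ < π) : Drift θ (1 + θ / π) = 1 := by
  have hα : 1 < 1 + θ / π := by simpa using by positivity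
  have hsupplement : θ / (1 + θ / π) = π - π / (1 + θ / π) := by field_simp; ring
  rw [Drift_eq_sin_div_sin hθ hθπ hα, hsupplement, sin_pi_sub]
  exact div_self (sin_pos_of_pos_of_lt_pi (by positivity) (div_lt_self pi_pos hα)).ne'

end Drift

section Kernel

variable {θ x y : ℝ}

lemma Pker_scale (θ x : ℝ) (hy : 0 < y) : Pker θ x y = Pker θ (x / y) 1 := by
  simp only [Pker]
  field_simp

lemma one_add_cos_pos (hθ : 0 < θ) (hθπ : θ < π) : 0 < 1 + cos θ := by
  rw [← neg_lt_iff_pos_add', ← cos_pi]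
  exact cos_lt_cos_of_nonneg_of_le_pi hθ.le le_rfl hθπ

lemma mul_one_add_sq_le_Pker_denom (θ x : ℝ) :
    (1 + cos θ) / 2 * (1 + x) ^ 2 ≤ x ^ 2 + 2 * cos θ * x * 1 + 1 ^ 2 := by
  nlinarith [mul_nonneg (sub_nonneg.2 (cos_le_one θ)) (sq_nonneg (x - 1))]

lemma Pker_denom_pos (hθ : 0 < θ) (hθπ : θ < π) (hx : 0 < x) :
    0 < x ^ 2 + 2 * cos θ * x * 1 + 1 ^ 2 := by
  have := one_add_cos_pos hθ hθπ
  exact lt_of_lt_of_le (by positivity) (mul_one_add_sq_le_Pker_denom θ x)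

lemma Pker_one_pos (hθ : 0 < θ) (hθπ : θ < π) (hx : 0 < x) : 0 < Pker θ x 1 :=
  div_pos (by positivity) (Pker_denom_pos hθ hθπ hx)

lemma continuousOn_Pker_one (hθ : 0 < θ) (hθπ : θ < π) :
    ContinuousOn (fun x => Pker θ x 1) (Ioi 0) :=
  ContinuousOn.div (by fun_prop) (by fun_prop) fun _ hx => (Pker_denom_pos hθ hθπ hx).ne'

lemma abs_Pker_one_le_rpow (hθ : 0 < θ) (hθπ : θ < π) (hx : 0 < x) {a : ℝ} (ha : -1 ≤ a)
    (ha1 : a ≤ 1) : |Pker θ x 1| ≤ 2 / (1 + cos θ) * x ^ (-a) := by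
  have hc := one_add_cos_pos hθ hθπ
  have hpow : x ^ (1 + a) ≤ (1 + x) ^ 2 := calc
    x ^ (1 + a) ≤ (1 + x) ^ (1 + a) := by gcongr <;> linarith
    _ ≤ (1 + x) ^ (2 : ℝ) := by gcongr <;> linarith
    _ = (1 + x) ^ 2 := rpow_two _
  rw [abs_of_pos (Pker_one_pos hθ hθπ hx), Pker, mul_one]
  calc x / (x ^ 2 + 2 * cos θ * x * 1 + 1 ^ 2) ≤ x / ((1 + cos θ) / 2 * (1 + x) ^ 2) := by
        gcongr; exact mul_one_add_sq_le_Pker_denom θ x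
    _ ≤ x / ((1 + cos θ) / 2 * x ^ (1 + a)) := by gcongr
    _ = 2 / (1 + cos θ) * x ^ (-a) := by
        rw [rpow_add hx, rpow_one, rpow_neg hx.le]
        field_simp

lemma div_one_add_sq_le_Pker_one (hθ : 0 < θ) (hθπ : θ < π) (hx : 0 < x) :
    x / (1 + x) ^ 2 ≤ Pker θ x 1 := by
  rw [Pker, mul_one]
  have := Pker_denom_pos hθ hθπ hx
  gcongr
  nlinarith [mul_nonneg hx.le (sub_nonneg.2 (cos_le_one θ))]

/-- The moment `∫₀^∞ s^{-ε} P(s^α, 1) ds`, written as in the definition of `S_ε`, which is the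
case `α = 1 + θ / π`. -/
noncomputable def kernelMoment (θ α ε : ℝ) : ℝ :=
  ∫ s in Ioi (0 : ℝ), s ^ (-ε) / (s ^ α + 2 * cos θ + s ^ (-α))

lemma kernelMoment_eq_integral_Pker (θ α ε : ℝ) :
    kernelMoment θ α ε = ∫ s in Ioi (0 : ℝ), Pker θ (s ^ α) 1 * s ^ (-ε) := by
  refine setIntegral_congr_fun measurableSet_Ioi fun s hs => ?_
  have hx : 0 < s ^ α := rpow_pos_of_pos hs α
  have hdenom : (s ^ α) ^ 2 + 2 * cos θ * s ^ α * 1 + 1 ^ 2 =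
      s ^ α * (s ^ α + 2 * cos θ + s ^ (-α)) := by
    rw [rpow_neg (le_of_lt hs)]
    field_simp
  simp only [Pker]
  rw [hdenom, mul_one, div_mul_eq_mul_div, mul_div_mul_left _ _ hx.ne']

variable {α ε : ℝ}

lemma integrableOn_Pker_rpow (hθ : 0 < θ) (hθπ : θ < π) (hα : 1 < α) :
    IntegrableOn (fun s : ℝ => Pker θ (s ^ α) 1) (Ioi 0) := by
  have hbound {a : ℝ} (ha : -1 ≤ a) (ha1 : a ≤ 1) (x : ℝ) (hx : 0 < x) :=
    abs_Pker_one_le_rpow hθ hθπ hx ha ha1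
  simpa using integrableOn_comp_rpow_mul_rpow (α := α) (ε := 0) (continuousOn_Pker_one hθ hθπ)
    (hbound (a := 0) (by norm_num) (by norm_num)) (hbound (a := 1) (by norm_num) le_rfl)
    (by simp) (by simpa using hα)

lemma kernelMoment_zero_pos (hθ : 0 < θ) (hθπ : θ < π) (hα : 1 < α) : 0 < kernelMoment θ α 0 := by
  have hpos (s : ℝ) (hs : 0 < s) : 0 < Pker θ (s ^ α) 1 :=
    Pker_one_pos hθ hθπ (rpow_pos_of_pos hs α)
  simp only [kernelMoment_eq_integral_Pker, neg_zero, rpow_zero, mul_one]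
  rw [setIntegral_pos_iff_support_of_nonneg_ae
    (ae_restrict_of_forall_mem measurableSet_Ioi fun s hs => (hpos s hs).le)
    (integrableOn_Pker_rpow hθ hθπ hα)]
  exact lt_of_lt_of_le (b := volume (Ioi (0 : ℝ))) (by simp)
    (measure_mono fun s hs => ⟨(hpos s hs).ne', hs⟩)

end Kernel

section WeightedMean

/-- The mean of `k ↦ k^{-ε}` over `k ≥ 1` with weights `P(X_k, y)`; the weight `w_j` of the theorem
is its value at `y = Y_j`. The value is `0` if the weights are not summable. -/
noncomputable def weightedMean (θ : ℝ) (X : ℕ → ℝ) (y ε : ℝ) : ℝ :=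
  (∑' k : ℕ, Pker θ (X (k + 1)) y * ((k : ℝ) + 1) ^ (-ε)) / ∑' k : ℕ, Pker θ (X (k + 1)) y

variable {θ α ε T : ℝ} {X : ℕ → ℝ}

lemma rpow_mul_weightedMean (θ α ε : ℝ) (X : ℕ → ℝ) (hT : 0 < T) :
    T ^ ε * weightedMean θ X (T ^ α) ε =
      (T⁻¹ * ∑' k : ℕ, Pker θ (X (k + 1) / T ^ α) 1 * (((k : ℝ) + 1) / T) ^ (-ε)) /
        (T⁻¹ * ∑' k : ℕ, Pker θ (X (k + 1) / T ^ α) 1 * (((k : ℝ) + 1) / T) ^ (-0 : ℝ)) := by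
  have hpow (k : ℕ) : (((k : ℝ) + 1) / T) ^ (-ε) = T ^ ε * ((k : ℝ) + 1) ^ (-ε) := by
    rw [div_rpow (by positivity) hT.le, rpow_neg hT.le, div_inv_eq_mul, mul_comm]
  simp only [weightedMean, hpow, Pker_scale θ _ (rpow_pos_of_pos hT α), neg_zero, rpow_zero,
    mul_one, mul_left_comm _ (T ^ ε), tsum_mul_left]
  rw [mul_div_assoc (T ^ ε), mul_div_mul_left _ _ (inv_ne_zero hT.ne')]

lemma summable_Pker (hθ : 0 < θ) (hθπ : θ < π) (hα : 1 < α) (hXpos : ∀ k, 1 ≤ k → 0 < X k)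
    (hX : X ~[atTop] fun k : ℕ => (k : ℝ) ^ α) {y : ℝ} (hy : 0 < y) :
    Summable fun k : ℕ => Pker θ (X (k + 1)) y := by
  have hα0 : 0 < α := one_pos.trans hα
  have hyα : (y ^ α⁻¹) ^ α = y := rpow_inv_rpow hy.le hα0.ne'
  have hsum := summable_scaled_terms (g := fun x => Pker θ x 1) (a := 0) (b := 1) (ε := 0) hXpos hX
    (fun x hx => abs_Pker_one_le_rpow hθ hθπ hx (by norm_num) (by norm_num))
    (fun x hx => abs_Pker_one_le_rpow hθ hθπ hx (by norm_num) le_rfl)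
    (by simp) (by simp) (by simpa using hα) (rpow_pos_of_pos hy α⁻¹)
  simpa [Pker_scale θ _ hy, hyα] using hsum

lemma tendsto_inv_mul_tsum_Pker (hθ : 0 < θ) (hθπ : θ < π) (hα : 1 < α)
    (hXpos : ∀ k, 1 ≤ k → 0 < X k) (hX : X ~[atTop] fun k : ℕ => (k : ℝ) ^ α)
    (hε : 1 - α < ε) (hεα : ε < α + 1) :
    Tendsto (fun T : ℝ =>
      T⁻¹ * ∑' k : ℕ, Pker θ (X (k + 1) / T ^ α) 1 * (((k : ℝ) + 1) / T) ^ (-ε))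
      atTop (𝓝 (kernelMoment θ α ε)) := by
  have hα0 : 0 < α := one_pos.trans hα
  have hexponent : α * max (-1) (-ε / α) + ε = max (ε - α) 0 := by
    rw [mul_max_of_nonneg _ _ hα0.le, max_add, mul_div_cancel₀ _ hα0.ne']
    ring_nf
  rw [kernelMoment_eq_integral_Pker]
  -- `P(x, 1) = O(x^{-a})` for `|a| ≤ 1`; this `a` makes `0 ≤ α a + ε < 1`.
  refine tendsto_inv_mul_tsum_scaled_terms (a := max (-1) (-ε / α)) (b := 1) hXpos hX
    (continuousOn_Pker_one hθ hθπ)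
    (fun x hx => abs_Pker_one_le_rpow hθ hθπ hx (le_max_left _ _) (max_le (by norm_num) ?_))
    (fun x hx => abs_Pker_one_le_rpow hθ hθπ hx (by norm_num) le_rfl)
    (hexponent ▸ le_max_right _ _) (hexponent ▸ max_lt (by linarith) one_pos) (by linarith)
  rw [div_le_one hα0]
  linarith

theorem tendsto_rpow_mul_weightedMean (hθ : 0 < θ) (hθπ : θ < π) (hα : 1 < α)
    (hXpos : ∀ k, 1 ≤ k → 0 < X k) (hX : X ~[atTop] fun k : ℕ => (k : ℝ) ^ α)
    (hε : 1 - α < ε) (hεα : ε < α + 1) :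
    Tendsto (fun T : ℝ => T ^ ε * weightedMean θ X (T ^ α) ε) atTop
      (𝓝 (kernelMoment θ α ε / kernelMoment θ α 0)) := by
  refine ((tendsto_inv_mul_tsum_Pker hθ hθπ hα hXpos hX hε hεα).div
    (tendsto_inv_mul_tsum_Pker hθ hθπ hα hXpos hX (by linarith) (by linarith))
    (kernelMoment_zero_pos hθ hθπ hα).ne').congr' ?_
  filter_upwards [eventually_gt_atTop 0] with T hT
  exact (rpow_mul_weightedMean θ α ε X hT).symm

lemma exists_mul_rpow_le_Pker (hθ : 0 < θ) (hθπ : θ < π) (hα : 0 ≤ α)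
    (hXpos : ∀ k, 1 ≤ k → 0 < X k) (hX : X ~[atTop] fun k : ℕ => (k : ℝ) ^ α) :
    ∃ c, 0 < c ∧ ∀ T, 0 < T → ∀ k : ℕ, (k : ℝ) + 1 ≤ T →
      c * (((k : ℝ) + 1) / T) ^ α ≤ Pker θ (X (k + 1) / T ^ α) 1 := by
  obtain ⟨K, hK, hinv⟩ := exists_rpow_le_mul_rpow_of_isEquivalent hXpos hX (-1)
  obtain ⟨L, hL, hXL⟩ := exists_rpow_le_mul_rpow_of_isEquivalent hXpos hX 1
  refine ⟨K⁻¹ / (1 + L) ^ 2, by positivity, fun T hT k hkT => ?_⟩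
  have hXk := hXpos (k + 1) (by omega)
  have hk : 0 < (k : ℝ) + 1 := by positivity
  have hlower : K⁻¹ * (((k : ℝ) + 1) / T) ^ α ≤ X (k + 1) / T ^ α := by
    have hXinv := hinv k
    rw [rpow_neg_one, mul_neg_one, rpow_neg hk.le] at hXinv
    rw [div_rpow hk.le hT.le, ← mul_div_assoc]
    gcongr
    simpa only [mul_inv, inv_inv] using inv_le_of_inv_le₀ hXk hXinv
  have hupper : X (k + 1) / T ^ α ≤ L := by
    rw [div_le_iff₀ (by positivity)]
    calc X (k + 1) ≤ L * ((k : ℝ) + 1) ^ α := by simpa using hXL k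
      _ ≤ L * T ^ α := by gcongr
  calc K⁻¹ / (1 + L) ^ 2 * (((k : ℝ) + 1) / T) ^ α
      = K⁻¹ * (((k : ℝ) + 1) / T) ^ α / (1 + L) ^ 2 := by ring
    _ ≤ X (k + 1) / T ^ α / (1 + X (k + 1) / T ^ α) ^ 2 := by gcongr
    _ ≤ Pker θ (X (k + 1) / T ^ α) 1 := div_one_add_sq_le_Pker_one hθ hθπ (by positivity)

lemma summable_Pker_mul_rpow (hθ : 0 < θ) (hθπ : θ < π) (hα : 1 < α)
    (hXpos : ∀ k, 1 ≤ k → 0 < X k) (hX : X ~[atTop] fun k : ℕ => (k : ℝ) ^ α) (hε : 0 ≤ ε)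
    (hT : 0 < T) :
    Summable fun k : ℕ => Pker θ (X (k + 1) / T ^ α) 1 * (((k : ℝ) + 1) / T) ^ (-ε) := by
  have hXk (k : ℕ) : 0 < X (k + 1) / T ^ α :=
    div_pos (hXpos (k + 1) (by omega)) (rpow_pos_of_pos hT α)
  refine ((summable_Pker hθ hθπ hα hXpos hX (rpow_pos_of_pos hT α)).mul_right
    (T⁻¹ ^ (-ε))).of_nonneg_of_le (fun k => ?_) fun k => ?_
  all_goals have hpos := Pker_one_pos hθ hθπ (hXk k)
  · positivity
  · rw [Pker_scale θ _ (rpow_pos_of_pos hT α)]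
    refine mul_le_mul_of_nonneg_left (rpow_le_rpow_of_nonpos (by positivity) ?_ (by linarith))
      hpos.le
    rw [inv_eq_one_div]
    gcongr
    linarith [k.cast_nonneg (α := ℝ)]

lemma tendsto_inv_mul_tsum_Pker_atTop (hθ : 0 < θ) (hθπ : θ < π) (hα : 1 < α)
    (hXpos : ∀ k, 1 ≤ k → 0 < X k) (hX : X ~[atTop] fun k : ℕ => (k : ℝ) ^ α)
    (hε : α + 1 ≤ ε) :
    Tendsto (fun T : ℝ =>
      T⁻¹ * ∑' k : ℕ, Pker θ (X (k + 1) / T ^ α) 1 * (((k : ℝ) + 1) / T) ^ (-ε)) atTop atTop := by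
  obtain ⟨c, hc, hlower⟩ := exists_mul_rpow_le_Pker hθ hθπ (by linarith) hXpos hX
  have hharmonic : Tendsto (fun T : ℝ => c * ∑ k ∈ Finset.range ⌊T⌋₊, 1 / ((k : ℝ) + 1))
      atTop atTop :=
    (tendsto_sum_range_one_div_nat_succ_atTop.comp tendsto_nat_floor_atTop).const_mul_atTop hc
  refine tendsto_atTop_mono' _ ?_ hharmonic
  filter_upwards [eventually_gt_atTop 0] with T hT
  have hterm (k : ℕ) (hkT : (k : ℝ) + 1 ≤ T) : c * (T * (1 / ((k : ℝ) + 1))) ≤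
      Pker θ (X (k + 1) / T ^ α) 1 * (((k : ℝ) + 1) / T) ^ (-ε) := by
    have hu : 0 < ((k : ℝ) + 1) / T := by positivity
    have hu1 : ((k : ℝ) + 1) / T ≤ 1 := (div_le_one hT).2 hkT
    calc c * (T * (1 / ((k : ℝ) + 1))) = c * (((k : ℝ) + 1) / T) ^ (-1 : ℝ) := by
          rw [rpow_neg_one]; field_simp
      _ ≤ c * (((k : ℝ) + 1) / T) ^ (α + -ε) := by
          gcongr c * ?_
          exact rpow_le_rpow_of_exponent_ge hu hu1 (by linarith)
      _ = c * (((k : ℝ) + 1) / T) ^ α * (((k : ℝ) + 1) / T) ^ (-ε) := by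
          rw [rpow_add hu, mul_assoc]
      _ ≤ _ := by gcongr; exact hlower T hT k hkT
  rw [le_inv_mul_iff₀ hT, mul_left_comm, Finset.mul_sum, Finset.mul_sum]
  refine (Finset.sum_le_sum fun k hk => hterm k ?_).trans
    ((summable_Pker_mul_rpow hθ hθπ hα hXpos hX (by linarith) hT).sum_le_tsum _ fun k _ => ?_)
  · exact_mod_cast (Nat.le_floor_iff hT.le).1 (Finset.mem_range.1 hk)
  · have := Pker_one_pos hθ hθπ (div_pos (hXpos (k + 1) (by omega)) (rpow_pos_of_pos hT α))
    positivity

theorem tendsto_rpow_mul_weightedMean_atTop (hθ : 0 < θ) (hθπ : θ < π) (hα : 1 < α)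
    (hXpos : ∀ k, 1 ≤ k → 0 < X k) (hX : X ~[atTop] fun k : ℕ => (k : ℝ) ^ α)
    (hε : α + 1 ≤ ε) :
    Tendsto (fun T : ℝ => T ^ ε * weightedMean θ X (T ^ α) ε) atTop atTop := by
  refine ((tendsto_inv_mul_tsum_Pker_atTop hθ hθπ hα hXpos hX hε).atTop_mul_pos
    (inv_pos.2 (kernelMoment_zero_pos hθ hθπ hα))
    ((tendsto_inv_mul_tsum_Pker hθ hθπ hα hXpos hX (by linarith) (by linarith)).inv₀
      (kernelMoment_zero_pos hθ hθπ hα).ne')).congr' ?_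
  filter_upwards [eventually_gt_atTop 0] with T hT
  rw [rpow_mul_weightedMean θ α ε X hT, div_eq_mul_inv]

end WeightedMean

section FixedPoint

variable {θ α y : ℝ} {X Y Q : ℕ → ℝ}

lemma toReal_phi (hθ : 0 < θ) (hθπ : θ < π) (X : ℕ → ℝ) {j : ℕ} (hy : 0 < Y j) :
    (phi θ X Y j).toReal = π⁻¹ * ∑' k : ℕ, Theta θ (X (k + 1)) (Y j) := by
  have hnonneg (k : ℕ) : 0 ≤ Theta θ (X (k + 1)) (Y j) :=
    Theta_scale θ _ hy ▸ Theta_one_nonneg hθ hθπ _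
  rw [phi, ENNReal.toReal_mul, ENNReal.tsum_toReal_eq fun _ => ENNReal.ofReal_ne_top,
    ENNReal.toReal_ofReal (by positivity), one_div]
  simp only [ENNReal.toReal_ofReal (hnonneg _)]

lemma summable_inv_of_isEquivalent_rpow (hα : 1 < α) (hXpos : ∀ k, 1 ≤ k → 0 < X k)
    (hX : X ~[atTop] fun k : ℕ => (k : ℝ) ^ α) : Summable fun k : ℕ => (X (k + 1))⁻¹ := by
  obtain ⟨K, -, hK⟩ := exists_rpow_le_mul_rpow_of_isEquivalent hXpos hX (-1)
  have hseries : Summable fun k : ℕ => ((k : ℝ) + 1) ^ (α * -1) := by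
    exact_mod_cast (summable_nat_add_iff 1).2 (summable_nat_rpow.2 (by linarith : α * -1 < -1))
  refine (hseries.mul_left K).of_nonneg_of_le
    (fun k => (inv_pos.2 (hXpos (k + 1) (by omega))).le) fun k => ?_
  simpa only [rpow_neg_one] using hK k

lemma tsum_Theta_le (hθ : 0 < θ) (hθπ : θ < π) (hα : 1 < α) (hXpos : ∀ k, 1 ≤ k → 0 < X k)
    (hX : X ~[atTop] fun k : ℕ => (k : ℝ) ^ α) (hy : 0 < y) :
    ∑' k : ℕ, Theta θ (X (k + 1)) y ≤ π * y * ∑' k : ℕ, (X (k + 1))⁻¹ := by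
  have hsum := (summable_inv_of_isEquivalent_rpow hα hXpos hX).mul_left (π * y)
  have hle (k : ℕ) : Theta θ (X (k + 1)) y ≤ π * y * (X (k + 1))⁻¹ := by
    have hXk := hXpos (k + 1) (by omega)
    rw [Theta_scale θ _ hy, ← div_eq_mul_inv, ← div_div_eq_mul_div]
    exact Theta_one_le_pi_div hθ hθπ (by positivity)
  have hnonneg (k : ℕ) : 0 ≤ Theta θ (X (k + 1)) y :=
    Theta_scale θ _ hy ▸ Theta_one_nonneg hθ hθπ _
  rw [← tsum_mul_left]
  exact (hsum.of_nonneg_of_le hnonneg hle).tsum_le_tsum hle hsum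

lemma tendsto_inv_mul_tsum_Theta (hθ : 0 < θ) (hθπ : θ < π) (hα : 1 < α)
    (hXpos : ∀ k, 1 ≤ k → 0 < X k) (hX : X ~[atTop] fun k : ℕ => (k : ℝ) ^ α) :
    Tendsto (fun T : ℝ => T⁻¹ * ∑' k : ℕ, Theta θ (X (k + 1)) (T ^ α)) atTop
      (𝓝 (π * Drift θ α)) := by
  have hlim := tendsto_inv_mul_tsum_scaled_terms (g := fun x => Theta θ x 1) (a := 0) (b := 1)
    (ε := 0) hXpos hX (continuous_Theta_one hθ hθπ).continuousOn
    (fun x _ => abs_Theta_one_le_rpow_zero hθ hθπ x)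
    (fun x hx => abs_Theta_one_le_rpow_neg_one hθ hθπ hx) (by simp) (by simp) (by simpa using hα)
  simp only [neg_zero, rpow_zero, mul_one] at hlim
  rw [Drift, ← mul_assoc, mul_one_div_cancel pi_ne_zero, one_mul]
  refine hlim.congr' ?_
  filter_upwards [eventually_gt_atTop 0] with T hT
  simp only [Theta_scale θ _ (rpow_pos_of_pos hT α)]

lemma eventually_tsum_Theta_eq (hθ : 0 < θ) (hθπ : θ < π) (hQ : Tendsto Q atTop atTop)
    (hYpos : ∀ j, 1 ≤ j → 0 < Y j)
    (hfix : ∀ᶠ j in atTop, phi θ X Y j = ENNReal.ofReal (Q j)) :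
    ∀ᶠ j in atTop, ∑' k : ℕ, Theta θ (X (k + 1)) (Y j) = π * Q j := by
  filter_upwards [hfix, hQ.eventually_ge_atTop 0, eventually_ge_atTop 1] with j hj hQj hj1
  have hphi := toReal_phi hθ hθπ X (hYpos j hj1)
  rw [hj, ENNReal.toReal_ofReal hQj] at hphi
  rw [hphi, mul_inv_cancel_left₀ pi_ne_zero]

lemma tendsto_atTop_of_phi_eq (hθ : 0 < θ) (hθπ : θ < π) (hα : 1 < α)
    (hXpos : ∀ k, 1 ≤ k → 0 < X k) (hX : X ~[atTop] fun k : ℕ => (k : ℝ) ^ α)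
    (hQ : Tendsto Q atTop atTop) (hYpos : ∀ j, 1 ≤ j → 0 < Y j)
    (hfix : ∀ᶠ j in atTop, phi θ X Y j = ENNReal.ofReal (Q j)) : Tendsto Y atTop atTop := by
  set A := ∑' k : ℕ, (X (k + 1))⁻¹
  have hA : 0 < A := (summable_inv_of_isEquivalent_rpow hα hXpos hX).tsum_pos
    (fun k => (inv_pos.2 (hXpos (k + 1) (by omega))).le) 0 (inv_pos.2 (hXpos 1 le_rfl))
  refine tendsto_atTop_mono' _ ?_ (hQ.atTop_div_const hA)
  filter_upwards [eventually_tsum_Theta_eq hθ hθπ hQ hYpos hfix, eventually_ge_atTop 1]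
    with j hj hj1
  rw [div_le_iff₀ hA]
  refine le_of_mul_le_mul_left ?_ pi_pos
  rw [← hj, ← mul_assoc]
  exact tsum_Theta_le hθ hθπ hα hXpos hX (hYpos j hj1)

theorem tendsto_div_rpow_inv_of_phi_eq (hθ : 0 < θ) (hθπ : θ < π) (hα : 1 < α)
    (hXpos : ∀ k, 1 ≤ k → 0 < X k) (hX : X ~[atTop] fun k : ℕ => (k : ℝ) ^ α)
    (hQ : Tendsto Q atTop atTop) (hYpos : ∀ j, 1 ≤ j → 0 < Y j)
    (hfix : ∀ᶠ j in atTop, phi θ X Y j = ENNReal.ofReal (Q j)) :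
    Tendsto (fun j => Q j / Y j ^ α⁻¹) atTop (𝓝 (Drift θ α)) := by
  have hα0 : 0 < α := one_pos.trans hα
  have hroot := (tendsto_rpow_atTop (inv_pos.2 hα0)).comp
    (tendsto_atTop_of_phi_eq hθ hθπ hα hXpos hX hQ hYpos hfix)
  have hlim := ((tendsto_inv_mul_tsum_Theta hθ hθπ hα hXpos hX).comp hroot).const_mul π⁻¹
  rw [inv_mul_cancel_left₀ pi_ne_zero] at hlim
  refine hlim.congr' ?_
  filter_upwards [eventually_tsum_Theta_eq hθ hθπ hQ hYpos hfix, eventually_ge_atTop 1]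
    with j hj hj1
  simp only [Function.comp_apply, rpow_inv_rpow (hYpos j hj1).le hα0.ne', hj]
  field_simp

lemma tendsto_natCast_div_rpow_inv_of_phi_eq (hθ : 0 < θ) (hθπ : θ < π) (hα : 1 < α)
    (hXpos : ∀ k, 1 ≤ k → 0 < X k) (hX : X ~[atTop] fun k : ℕ => (k : ℝ) ^ α)
    (hQ : Q ~[atTop] fun j : ℕ => Drift θ α * j) (hQtop : Tendsto Q atTop atTop)
    (hYpos : ∀ j, 1 ≤ j → 0 < Y j)
    (hfix : ∀ᶠ j in atTop, phi θ X Y j = ENNReal.ofReal (Q j)) :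
    Tendsto (fun j : ℕ => j / Y j ^ α⁻¹) atTop (𝓝 1) := by
  have hD := (Drift_pos hθ hθπ hα).ne'
  have hQ0 : ∀ᶠ j in atTop, Q j ≠ 0 := hQtop.eventually_ne_atTop 0
  have hratio : Tendsto (fun j : ℕ => Drift θ α * j / Q j) atTop (𝓝 1) :=
    (isEquivalent_iff_tendsto_one hQ0).1 hQ.symm
  have hlim := ((hratio.mul (tendsto_div_rpow_inv_of_phi_eq hθ hθπ hα hXpos hX hQtop hYpos
    hfix)).div_const (Drift θ α))
  rw [one_mul, div_self hD] at hlim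
  refine hlim.congr' ?_
  filter_upwards [hQ0] with j hj
  field_simp

end FixedPoint

lemma isEquivalent_natCast_of_sub_isBigO_one {Q : ℕ → ℝ}
    (hQ : (fun k : ℕ => Q k - k) =O[atTop] fun _ : ℕ => (1 : ℝ)) :
    Q ~[atTop] fun k : ℕ => (k : ℝ) :=
  hQ.trans_isLittleO ((isLittleO_one_left_iff ℝ).2
    (tendsto_norm_atTop_atTop.comp tendsto_natCast_atTop_atTop))

theorem stmt_16_general {θ α : ℝ} (hθ : 0 < θ) (hθπ : θ < π) (hα : 1 < α) {Q X Y : ℕ → ℝ}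
    (hQ : Q ~[atTop] fun j : ℕ => Drift θ α * j)
    (hXpos : ∀ k, 1 ≤ k → 0 < X k) (hYpos : ∀ j, 1 ≤ j → 0 < Y j)
    (hX : X ~[atTop] fun k : ℕ => (k : ℝ) ^ α)
    (hfix : ∀ᶠ j in atTop, phi θ X Y j = ENNReal.ofReal (Q j)) :
    (∀ j, 1 ≤ j → Summable fun k : ℕ => Pker θ (X (k + 1)) (Y j)) ∧
    ∀ ε : ℝ,
      (1 - α < ε → ε < α + 1 →
        Tendsto (fun j : ℕ => (j : ℝ) ^ ε * weightedMean θ X (Y j) ε) atTop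
          (𝓝 (kernelMoment θ α ε / kernelMoment θ α 0))) ∧
      (α + 1 ≤ ε →
        Tendsto (fun j : ℕ => (j : ℝ) ^ ε * weightedMean θ X (Y j) ε) atTop atTop) := by
  have hα0 : 0 < α := one_pos.trans hα
  have hQtop : Tendsto Q atTop atTop := hQ.symm.tendsto_atTop
    (tendsto_natCast_atTop_atTop.const_mul_atTop (Drift_pos hθ hθπ hα))
  have hroot : Tendsto (fun j => Y j ^ α⁻¹) atTop atTop := (tendsto_rpow_atTop (inv_pos.2 hα0)).comp
    (tendsto_atTop_of_phi_eq hθ hθπ hα hXpos hX hQtop hYpos hfix)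
  have hratio (ε : ℝ) : Tendsto (fun j : ℕ => (j / Y j ^ α⁻¹) ^ ε) atTop (𝓝 1) := by
    simpa using (tendsto_natCast_div_rpow_inv_of_phi_eq hθ hθπ hα hXpos hX hQ hQtop hYpos
      hfix).rpow_const (p := ε) (.inl one_ne_zero)
  have hfactor (ε : ℝ) : (fun j : ℕ => (j / Y j ^ α⁻¹) ^ ε *
      ((Y j ^ α⁻¹) ^ ε * weightedMean θ X ((Y j ^ α⁻¹) ^ α) ε)) =ᶠ[atTop]
        fun j : ℕ => (j : ℝ) ^ ε * weightedMean θ X (Y j) ε := by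
    filter_upwards [eventually_ge_atTop 1] with j hj
    have hroot_pos := rpow_pos_of_pos (hYpos j hj) α⁻¹
    rw [← mul_assoc, ← mul_rpow (by positivity) hroot_pos.le, div_mul_cancel₀ _ hroot_pos.ne',
      rpow_inv_rpow (hYpos j hj).le hα0.ne']
  refine ⟨fun j hj => summable_Pker hθ hθπ hα hXpos hX (hYpos j hj), fun ε =>
    ⟨fun hε hεα => ?_, fun hε => ?_⟩⟩
  · have hlim := (tendsto_rpow_mul_weightedMean hθ hθπ hα hXpos hX hε hεα).comp hroot
    simpa only [one_mul] using ((hratio ε).mul hlim).congr' (hfactor ε)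
  · have hlim := (tendsto_rpow_mul_weightedMean_atTop hθ hθπ hα hXpos hX hε).comp hroot
    exact ((hratio ε).pos_mul_atTop one_pos hlim).congr' (hfactor ε)

theorem stmt_16 (θ : ℝ) (hθ : 0 < θ) (hθπ : θ < Real.pi)
    (Q : ℕ → ℝ) (hQpos : ∀ k, 1 ≤ k → 0 < Q k)
    (hQ : (fun k : ℕ => Q k - (k : ℝ)) =O[atTop] fun _ : ℕ => (1 : ℝ))
    (X Y : ℕ → ℝ) (hXpos : ∀ k, 1 ≤ k → 0 < X k) (hYpos : ∀ j, 1 ≤ j → 0 < Y j)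
    (hX : (fun k : ℕ => Real.log (X k) - (1 + θ / Real.pi) * Real.log k)
      =o[atTop] fun _ : ℕ => (1 : ℝ))
    (hfix : ∀ j, 1 ≤ j → phi θ X Y j = ENNReal.ofReal (Q j)) :
    (∀ j, 1 ≤ j → Summable fun k : ℕ => Pker θ (X (k + 1)) (Y j)) ∧
    ∀ ε : ℝ, 0 ≤ ε →
      ((ε < 1 + θ / Real.pi + 1 →
        Tendsto (fun j : ℕ => (j : ℝ) ^ ε *
            ((∑' k : ℕ, Pker θ (X (k + 1)) (Y j) * ((k : ℝ) + 1) ^ (-ε)) /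
              ∑' k : ℕ, Pker θ (X (k + 1)) (Y j)))
          atTop (nhds (Sfun θ ε / Sfun θ 0))) ∧
      (1 + θ / Real.pi + 1 ≤ ε →
        Tendsto (fun j : ℕ => (j : ℝ) ^ ε *
            ((∑' k : ℕ, Pker θ (X (k + 1)) (Y j) * ((k : ℝ) + 1) ^ (-ε)) /
              ∑' k : ℕ, Pker θ (X (k + 1)) (Y j)))
          atTop atTop)) := by
  have hα : 1 < 1 + θ / π := by simpa using by positivity
  have hQ' : Q ~[atTop] fun j : ℕ => Drift θ (1 + θ / π) * j := by
    simpa only [Drift_one_add_div_pi hθ hθπ, one_mul] using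
      isEquivalent_natCast_of_sub_isBigO_one hQ
  obtain ⟨hsum, hlim⟩ := stmt_16_general hθ hθπ hα hQ' hXpos hYpos
    (isEquivalent_rpow_of_log_sub_isLittleO hXpos hX) (eventually_atTop.2 ⟨1, hfix⟩)
  exact ⟨hsum, fun ε hε => ⟨(hlim ε).1 (by linarith), (hlim ε).2⟩⟩
end

section
/- With α := 1 + θ/π: for every real ε with 0 < |ε − 1| < α, S_ε = (π/(α·sin θ))·sin((1−ε)·θ/α)/sin((1−ε)·π/α); moreover S_1 = θ/(α·sin θ) and S_1/S_0 = α − 1 = θ/π. -/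
open Filter Asymptotics MeasureTheory
open scoped ENNReal Topology

/-!
The substitution `t = s ^ α` turns `S_ε` into `α⁻¹` times the Mellin transform of
`1 / (t² + 2 cos θ t + 1) = 1 / ((t + e^{iθ}) (t + e^{-iθ}))` at `1 + (1 - ε) / α`.

The Beta integral and the reflection formula give the Mellin transform `w ^ (s - 1) π / sin (π s)`
of `1 / (t + w)` for `w > 0`, hence for all `w` in the slit plane, by analyticity in `w`. Partial
fractions then give the Mellin transform `M` of `1 / ((t + w) (t + z))` on `0 < re s < 1`, in the
form `sin (π s) (z - w) M s = π (w ^ (s - 1) - z ^ (s - 1))`, which extends to `0 < re s < 2` by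
analyticity in `s`. At `s = 1`, where `sin (π s)` vanishes, `M` is found by differentiating it.
-/

section MellinTransform

open Complex Set
open scoped Real

variable {θ : ℝ}

theorem ofReal_inv_cpow {x : ℝ} (hx : 0 ≤ x) (a : ℂ) : ((x⁻¹ : ℝ) : ℂ) ^ a = (x : ℂ) ^ (-a) := by
  rw [cpow_neg, ofReal_inv, inv_cpow _ _ (by rw [arg_ofReal_of_nonneg hx]; exact Real.pi_pos.ne)]

theorem betaIntegral_eq_mellin (u v : ℂ) :
    betaIntegral u v = mellin (fun t : ℝ ↦ (1 + t : ℂ) ^ (-(u + v))) u := by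
  have himage : (fun t : ℝ ↦ (1 + t)⁻¹) '' Ioi 0 = Ioo 0 1 := by
    rw [← image_image (·⁻¹) (1 + ·), image_const_add_Ioi, image_inv_eq_inv, inv_Ioi₀] <;> norm_num
  have hderiv (t : ℝ) (ht : t ∈ Ioi 0) :
      HasDerivWithinAt (fun t : ℝ ↦ (1 + t)⁻¹) (-1 / (1 + t) ^ 2) (Ioi 0) t :=
    (((hasDerivAt_id t).const_add 1).fun_inv
      (by simp only [id]; linarith [mem_Ioi.1 ht])).hasDerivWithinAt
  have hinj : InjOn (fun t : ℝ ↦ (1 + t)⁻¹) (Ioi 0) :=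
    (inv_injective.comp (add_right_injective 1)).injOn
  rw [betaIntegral_symm, betaIntegral, intervalIntegral.integral_of_le zero_le_one,
    integral_Ioc_eq_integral_Ioo, ← himage,
    integral_image_eq_integral_abs_deriv_smul measurableSet_Ioi hderiv hinj, mellin]
  refine setIntegral_congr_fun measurableSet_Ioi fun t (ht : 0 < t) ↦ ?_
  have h1t : (0 : ℝ) < 1 + t := by positivity
  have h1t' : (1 + t : ℂ) ≠ 0 := by exact_mod_cast h1t.ne'
  have habs : |-1 / (1 + t) ^ 2| = ((1 + t) ^ 2)⁻¹ := by
    rw [abs_div, abs_neg, abs_one, one_div, abs_of_pos (by positivity)]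
  have hsub : 1 - (((1 + t)⁻¹ : ℝ) : ℂ) = (t : ℂ) * (((1 + t)⁻¹ : ℝ) : ℂ) := by
    push_cast
    field_simp
    ring
  have hpow : (((1 + t) ^ 2)⁻¹ : ℂ) = (1 + t : ℂ) ^ (-2 : ℂ) := by
    rw [cpow_neg, cpow_ofNat]
  simp only [habs, hsub, mul_cpow_ofReal_nonneg ht.le (inv_pos.2 h1t).le,
    ofReal_inv_cpow h1t.le, real_smul, smul_eq_mul]
  push_cast
  rw [hpow, show -(u + v) = -2 + -(v - 1) + -(u - 1) by ring, cpow_add _ _ h1t',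
    cpow_add _ _ h1t']
  ring

theorem mellin_inv_ofReal_add_one {s : ℂ} (hs₀ : 0 < s.re) (hs₁ : s.re < 1) :
    mellin (fun t : ℝ ↦ ((t : ℂ) + 1)⁻¹) s = π / sin (π * s) := by
  have hbeta := Gamma_mul_Gamma_eq_betaIntegral (s := s) (t := 1 - s) hs₀ (by simpa using hs₁)
  rw [Gamma_mul_Gamma_one_sub, add_sub_cancel, Gamma_one, one_mul,
    betaIntegral_eq_mellin] at hbeta
  simpa only [add_sub_cancel, cpow_neg_one, add_comm] using hbeta.symm

theorem ofReal_add_ne_zero_of_mem_slitPlane {t : ℝ} (ht : 0 ≤ t) {w : ℂ} (hw : w ∈ slitPlane) :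
    (t : ℂ) + w ≠ 0 := by
  intro h
  rw [← neg_eq_of_add_eq_zero_right h, ← ofReal_neg, ofReal_mem_slitPlane] at hw
  linarith

theorem inv_ofReal_add_isBigO_atTop (w : ℂ) :
    (fun t : ℝ ↦ ((t : ℂ) + w)⁻¹) =O[atTop] fun t ↦ t ^ (-1 : ℝ) := by
  have hconst : (fun _ : ℝ ↦ w) =o[atTop] fun t : ℝ ↦ (t : ℂ) :=
    isLittleO_const_left.2 (.inr (by simpa [Function.comp_def] using tendsto_abs_atTop_atTop))
  have hequiv : (fun t : ℝ ↦ (t : ℂ) + w) ~[atTop] fun t : ℝ ↦ (t : ℂ) :=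
    IsEquivalent.refl.add_isLittleO hconst
  refine hequiv.inv.isBigO.trans (isBigO_of_le _ fun t ↦ ?_)
  simp [Real.rpow_neg_one]

theorem inv_ofReal_add_isBigO_nhdsGT_zero {w : ℂ} (hw : w ≠ 0) :
    (fun t : ℝ ↦ ((t : ℂ) + w)⁻¹) =O[𝓝[>] 0] fun t ↦ t ^ (-0 : ℝ) := by
  have hcont : ContinuousAt (fun t : ℝ ↦ ((t : ℂ) + w)⁻¹) 0 :=
    ContinuousAt.inv₀ (by fun_prop) (by simpa using hw)
  simpa only [neg_zero, Real.rpow_zero] using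
    (hcont.tendsto.isBigO_one ℝ).mono nhdsWithin_le_nhds

theorem continuousOn_inv_ofReal_add {w : ℂ} (hw : w ∈ slitPlane) :
    ContinuousOn (fun t : ℝ ↦ ((t : ℂ) + w)⁻¹) (Ioi 0) :=
  ContinuousOn.inv₀ (by fun_prop) fun _ ht ↦
    ofReal_add_ne_zero_of_mem_slitPlane (le_of_lt ht) hw

theorem mellinConvergent_inv_ofReal_add {w : ℂ} (hw : w ∈ slitPlane) {s : ℂ} (hs₀ : 0 < s.re)
    (hs₁ : s.re < 1) : MellinConvergent (fun t : ℝ ↦ ((t : ℂ) + w)⁻¹) s :=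
  mellinConvergent_of_isBigO_rpow
    ((continuousOn_inv_ofReal_add hw).locallyIntegrableOn measurableSet_Ioi)
    (inv_ofReal_add_isBigO_atTop w) hs₁
    (inv_ofReal_add_isBigO_nhdsGT_zero (slitPlane_ne_zero hw)) hs₀

theorem inv_ofReal_add_mul_inv_isBigO_atTop (w z : ℂ) :
    (fun t : ℝ ↦ ((t : ℂ) + w)⁻¹ * ((t : ℂ) + z)⁻¹) =O[atTop] (· ^ (-2 : ℝ)) := by
  refine ((inv_ofReal_add_isBigO_atTop w).mul (inv_ofReal_add_isBigO_atTop z)).congr' .rfl ?_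
  filter_upwards [eventually_gt_atTop 0] with t ht
  rw [← Real.rpow_add ht]
  norm_num

theorem inv_ofReal_add_mul_inv_isBigO_nhdsGT_zero {w z : ℂ} (hw : w ≠ 0) (hz : z ≠ 0) :
    (fun t : ℝ ↦ ((t : ℂ) + w)⁻¹ * ((t : ℂ) + z)⁻¹) =O[𝓝[>] 0] (· ^ (-0 : ℝ)) := by
  simpa only [neg_zero, Real.rpow_zero, mul_one] using
    (inv_ofReal_add_isBigO_nhdsGT_zero hw).mul (inv_ofReal_add_isBigO_nhdsGT_zero hz)

theorem locallyIntegrableOn_inv_ofReal_add_mul_inv {w z : ℂ} (hw : w ∈ slitPlane)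
    (hz : z ∈ slitPlane) :
    LocallyIntegrableOn (fun t : ℝ ↦ ((t : ℂ) + w)⁻¹ * ((t : ℂ) + z)⁻¹) (Ioi 0) :=
  ((continuousOn_inv_ofReal_add hw).mul
    (continuousOn_inv_ofReal_add hz)).locallyIntegrableOn measurableSet_Ioi

theorem mellinConvergent_inv_ofReal_add_mul_inv {w z : ℂ} (hw : w ∈ slitPlane)
    (hz : z ∈ slitPlane) {s : ℂ} (hs₀ : 0 < s.re) (hs₂ : s.re < 2) :
    MellinConvergent (fun t : ℝ ↦ ((t : ℂ) + w)⁻¹ * ((t : ℂ) + z)⁻¹) s :=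
  mellinConvergent_of_isBigO_rpow (locallyIntegrableOn_inv_ofReal_add_mul_inv hw hz)
    (inv_ofReal_add_mul_inv_isBigO_atTop w z) hs₂
    (inv_ofReal_add_mul_inv_isBigO_nhdsGT_zero (slitPlane_ne_zero hw) (slitPlane_ne_zero hz)) hs₀

theorem analyticOnNhd_mellin_inv_ofReal_add_mul_inv {w z : ℂ} (hw : w ∈ slitPlane)
    (hz : z ∈ slitPlane) :
    AnalyticOnNhd ℂ (mellin fun t : ℝ ↦ ((t : ℂ) + w)⁻¹ * ((t : ℂ) + z)⁻¹) (re ⁻¹' Ioo 0 2) :=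
  DifferentiableOn.analyticOnNhd (fun _ hs ↦
    (mellin_differentiableAt_of_isBigO_rpow (locallyIntegrableOn_inv_ofReal_add_mul_inv hw hz)
      (inv_ofReal_add_mul_inv_isBigO_atTop w z) hs.2
      (inv_ofReal_add_mul_inv_isBigO_nhdsGT_zero (slitPlane_ne_zero hw) (slitPlane_ne_zero hz))
      hs.1).differentiableWithinAt) (isOpen_Ioo.preimage continuous_re)

theorem eventually_norm_ofReal_add_le {w₀ : ℂ} (hw₀ : w₀ ∈ slitPlane) :
    ∀ᶠ w in 𝓝 w₀, ∀ t : ℝ, 0 ≤ t → ‖(t : ℂ) + w₀‖ ≤ 2 * ‖(t : ℂ) + w‖ := by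
  obtain ⟨δ, hδ, hball⟩ := Metric.isOpen_iff.1 isOpen_slitPlane w₀ hw₀
  have hdist (t : ℝ) (ht : 0 ≤ t) : δ ≤ ‖(t : ℂ) + w₀‖ := by
    by_contra! hlt
    have hmem : (-t : ℂ) ∈ Metric.ball w₀ δ := by
      rwa [mem_ball_iff_norm, ← norm_neg, neg_sub, sub_neg_eq_add, add_comm]
    exact ofReal_add_ne_zero_of_mem_slitPlane ht (hball hmem) (add_neg_cancel _)
  filter_upwards [Metric.ball_mem_nhds w₀ (half_pos hδ)] with w hw t ht
  have htri : ‖(t : ℂ) + w₀‖ ≤ ‖(t : ℂ) + w‖ + ‖w - w₀‖ := by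
    calc ‖(t : ℂ) + w₀‖ = ‖((t : ℂ) + w) - (w - w₀)‖ := by congr 1; ring
      _ ≤ _ := norm_sub_le _ _
  linarith [hdist t ht, mem_ball_iff_norm.1 hw]

theorem differentiableOn_mellin_inv_ofReal_add {s : ℂ} (hs₀ : 0 < s.re) (hs₁ : s.re < 1) :
    DifferentiableOn ℂ (fun w ↦ mellin (fun t : ℝ ↦ ((t : ℂ) + w)⁻¹) s) slitPlane := by
  intro w₀ hw₀
  have hdom := hasDerivAt_integral_of_dominated_loc_of_deriv_le
    (μ := volume.restrict (Ioi (0 : ℝ))) (eventually_norm_ofReal_add_le hw₀)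
    (F := fun w t ↦ (t : ℂ) ^ (s - 1) • ((t : ℂ) + w)⁻¹)
    (F' := fun w t ↦ (t : ℂ) ^ (s - 1) • (-1 / ((t : ℂ) + w) ^ 2))
    (bound := fun t ↦ 4 * ‖(t : ℂ) ^ (s - 1) • (((t : ℂ) + w₀)⁻¹ * ((t : ℂ) + w₀)⁻¹)‖)
    (.of_forall fun w ↦ Measurable.aestronglyMeasurable (by fun_prop))
    (mellinConvergent_inv_ofReal_add hw₀ hs₀ hs₁)
    (Measurable.aestronglyMeasurable (by fun_prop)) ?_
    ((mellinConvergent_inv_ofReal_add_mul_inv hw₀ hw₀ hs₀ (by linarith)).norm.const_mul 4) ?_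
  · exact hdom.2.differentiableAt.differentiableWithinAt
  all_goals
    filter_upwards [ae_restrict_mem measurableSet_Ioi] with t (ht : 0 < t) w hw
    have hpos₀ := norm_pos_iff.2 (ofReal_add_ne_zero_of_mem_slitPlane ht.le hw₀)
    have hle := hw t ht.le
    have hpos : 0 < ‖(t : ℂ) + w‖ := by linarith
  · have hinv : ‖(t : ℂ) + w‖⁻¹ ≤ 2 * ‖(t : ℂ) + w₀‖⁻¹ := by
      rwa [← div_eq_mul_inv, inv_le_comm₀ hpos (by positivity), inv_div, div_le_iff₀' two_pos]
    calc ‖(t : ℂ) ^ (s - 1) • (-1 / ((t : ℂ) + w) ^ 2)‖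
        = ‖(t : ℂ) ^ (s - 1)‖ * ‖(t : ℂ) + w‖⁻¹ ^ 2 := by simp
      _ ≤ ‖(t : ℂ) ^ (s - 1)‖ * (2 * ‖(t : ℂ) + w₀‖⁻¹) ^ 2 := by gcongr
      _ = 4 * ‖(t : ℂ) ^ (s - 1) • (((t : ℂ) + w₀)⁻¹ * ((t : ℂ) + w₀)⁻¹)‖ := by
        simp only [norm_smul, norm_mul, norm_inv]
        ring
  · exact (((hasDerivAt_id w).const_add (t : ℂ)).fun_inv (norm_pos_iff.1 hpos)).const_smul
      ((t : ℂ) ^ (s - 1))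

theorem mellin_inv_ofReal_add_ofReal {x : ℝ} (hx : 0 < x) (s : ℂ) :
    mellin (fun t : ℝ ↦ ((t : ℂ) + x)⁻¹) s =
      (x : ℂ) ^ (s - 1) * mellin (fun t : ℝ ↦ ((t : ℂ) + 1)⁻¹) s := by
  have hx' : (x : ℂ) ≠ 0 := ofReal_ne_zero.2 hx.ne'
  have hfactor (t : ℝ) : ((t : ℂ) + x)⁻¹ = (x : ℂ)⁻¹ • (((x⁻¹ * t : ℝ) : ℂ) + 1)⁻¹ := by
    rw [smul_eq_mul, ← mul_inv]
    push_cast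
    field_simp
  simp only [hfactor]
  rw [mellin_const_smul, mellin_comp_mul_left (fun t : ℝ ↦ ((t : ℂ) + 1)⁻¹) s (inv_pos.2 hx),
    smul_eq_mul, smul_eq_mul, ← mul_assoc, ofReal_inv_cpow hx.le, neg_neg, mul_comm _ (_ ^ s),
    cpow_sub _ _ hx', cpow_one, div_eq_mul_inv]

theorem mellin_inv_ofReal_add {w : ℂ} (hw : w ∈ slitPlane) {s : ℂ} (hs₀ : 0 < s.re)
    (hs₁ : s.re < 1) :
    mellin (fun t : ℝ ↦ ((t : ℂ) + w)⁻¹) s = w ^ (s - 1) * (π / sin (π * s)) := by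
  have hmellin := (differentiableOn_mellin_inv_ofReal_add hs₀ hs₁).analyticOnNhd isOpen_slitPlane
  have hpow : AnalyticOnNhd ℂ (fun w ↦ w ^ (s - 1) * (π / sin (π * s))) slitPlane :=
    fun w hw ↦ (analyticAt_id.cpow analyticAt_const hw).mul analyticAt_const
  have hofReal : Tendsto ofReal (𝓝[≠] 1) (𝓝[≠] 1) := by
    simpa only [ofReal_one] using
      continuous_ofReal.continuousWithinAt.tendsto_nhdsWithin (x := 1) fun x ↦ by simp
  refine hmellin.eqOn_of_preconnected_of_frequently_eq hpow
    (starConvex_one_slitPlane.isPathConnected one_mem_slitPlane).isConnected.isPreconnected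
    one_mem_slitPlane (hofReal.frequently (Eventually.frequently ?_)) hw
  filter_upwards [nhdsWithin_le_nhds (eventually_gt_nhds zero_lt_one)] with x hx
  rw [mellin_inv_ofReal_add_ofReal hx, mellin_inv_ofReal_add_one hs₀ hs₁]

theorem sin_pi_mul_ne_zero_of_abs_re_lt_one {x : ℂ} (hx₀ : x ≠ 0) (hx : |x.re| < 1) :
    sin (π * x) ≠ 0 := by
  refine sin_pi_mul_ne_zero ?_
  rintro ⟨n, rfl⟩
  have hn : |n| < 1 := by exact_mod_cast hx
  exact hx₀ (by exact_mod_cast Int.abs_lt_one_iff.1 hn)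

theorem sin_mul_mellin_inv_ofReal_add_mul_inv_of_re_lt_one {w z : ℂ} (hw : w ∈ slitPlane)
    (hz : z ∈ slitPlane) {s : ℂ} (hs₀ : 0 < s.re) (hs₁ : s.re < 1) :
    sin (π * s) * ((z - w) *
        mellin (fun t : ℝ ↦ ((t : ℂ) + w)⁻¹ * ((t : ℂ) + z)⁻¹) s) =
      π * (w ^ (s - 1) - z ^ (s - 1)) := by
  have hsin : sin (π * s) ≠ 0 :=
    sin_pi_mul_ne_zero_of_abs_re_lt_one (by rintro rfl; simp at hs₀)
      (abs_lt.2 ⟨by linarith, hs₁⟩)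
  have hpartial : mellin (fun t : ℝ ↦ (z - w) • (((t : ℂ) + w)⁻¹ * ((t : ℂ) + z)⁻¹)) s =
      mellin (fun t : ℝ ↦ ((t : ℂ) + w)⁻¹ - ((t : ℂ) + z)⁻¹) s := by
    refine setIntegral_congr_fun measurableSet_Ioi fun t (ht : 0 < t) ↦ ?_
    have hwt := ofReal_add_ne_zero_of_mem_slitPlane ht.le hw
    have hzt := ofReal_add_ne_zero_of_mem_slitPlane ht.le hz
    simp only [smul_eq_mul, inv_sub_inv hwt hzt, add_sub_add_left_eq_sub, div_eq_mul_inv, mul_inv]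
  rw [← smul_eq_mul (z - w), ← mellin_const_smul, hpartial,
    (hasMellin_sub (mellinConvergent_inv_ofReal_add hw hs₀ hs₁)
      (mellinConvergent_inv_ofReal_add hz hs₀ hs₁)).2,
    mellin_inv_ofReal_add hw hs₀ hs₁, mellin_inv_ofReal_add hz hs₀ hs₁]
  field_simp

theorem sin_mul_mellin_inv_ofReal_add_mul_inv {w z : ℂ} (hw : w ∈ slitPlane)
    (hz : z ∈ slitPlane) {s : ℂ} (hs₀ : 0 < s.re) (hs₂ : s.re < 2) :
    sin (π * s) * ((z - w) *
        mellin (fun t : ℝ ↦ ((t : ℂ) + w)⁻¹ * ((t : ℂ) + z)⁻¹) s) =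
      π * (w ^ (s - 1) - z ^ (s - 1)) := by
  have hleft : AnalyticOnNhd ℂ (fun s ↦ sin (π * s) * ((z - w) *
      mellin (fun t : ℝ ↦ ((t : ℂ) + w)⁻¹ * ((t : ℂ) + z)⁻¹) s)) (re ⁻¹' Ioo 0 2) := fun s hs ↦
    (analyticAt_sin.comp (analyticAt_const.mul analyticAt_id)).mul
      (analyticAt_const.mul (analyticOnNhd_mellin_inv_ofReal_add_mul_inv hw hz s hs))
  have hright : AnalyticOnNhd ℂ (fun s ↦ π * (w ^ (s - 1) - z ^ (s - 1)))
      (re ⁻¹' Ioo 0 2) := fun s _ ↦ by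
    have hcpow {a : ℂ} (ha : a ∈ slitPlane) : AnalyticAt ℂ (fun s ↦ a ^ (s - 1)) s :=
      analyticAt_const.cpow (analyticAt_id.sub analyticAt_const) ha
    exact analyticAt_const.mul ((hcpow hw).sub (hcpow hz))
  have hstrip : IsPreconnected (re ⁻¹' Ioo 0 2) :=
    ((convex_Ioo (0 : ℝ) 2).linear_preimage reLm).isPreconnected
  have hhalf : re ⁻¹' Ioo 0 1 ∈ 𝓝 (1 / 2 : ℂ) :=
    (isOpen_Ioo.preimage continuous_re).mem_nhds (by norm_num)
  refine hleft.eqOn_of_preconnected_of_eventuallyEq hright hstrip (z₀ := 1 / 2) (by norm_num) ?_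
    ⟨hs₀, hs₂⟩
  filter_upwards [hhalf] with s hs
  exact sin_mul_mellin_inv_ofReal_add_mul_inv_of_re_lt_one hw hz hs.1 hs.2

theorem sub_mul_mellin_inv_ofReal_add_mul_inv_one {w z : ℂ} (hw : w ∈ slitPlane)
    (hz : z ∈ slitPlane) :
    (z - w) * mellin (fun t : ℝ ↦ ((t : ℂ) + w)⁻¹ * ((t : ℂ) + z)⁻¹) 1 = log z - log w := by
  set M := mellin fun t : ℝ ↦ ((t : ℂ) + w)⁻¹ * ((t : ℂ) + z)⁻¹
  have hM : HasDerivAt M (deriv M 1) 1 :=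
    (analyticOnNhd_mellin_inv_ofReal_add_mul_inv hw hz 1 (by norm_num)).differentiableAt.hasDerivAt
  have hleft : HasDerivAt (fun s ↦ sin (π * s) * ((z - w) * M s))
      (-π * ((z - w) * M 1)) 1 := by
    refine ((((hasDerivAt_id (1 : ℂ)).const_mul (π : ℂ)).csin).mul
      (hM.const_mul (z - w))).congr_deriv ?_
    simp
  have hright : HasDerivAt (fun s : ℂ ↦ π * (w ^ (s - 1) - z ^ (s - 1)))
      (π * (log w - log z)) 1 := by
    have hcpow {a : ℂ} (ha : a ∈ slitPlane) : HasDerivAt (fun s : ℂ ↦ a ^ (s - 1)) (log a) 1 := by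
      simpa using ((hasDerivAt_id (1 : ℂ)).sub_const 1).const_cpow (.inl (slitPlane_ne_zero ha))
    exact ((hcpow hw).sub (hcpow hz)).const_mul _
  have hstrip : re ⁻¹' Ioo 0 2 ∈ 𝓝 (1 : ℂ) :=
    (isOpen_Ioo.preimage continuous_re).mem_nhds (by norm_num)
  have hderiv := hleft.unique (hright.congr_of_eventuallyEq (by
    filter_upwards [hstrip] with s hs using sin_mul_mellin_inv_ofReal_add_mul_inv hw hz hs.1 hs.2))
  have hpi : (π : ℂ) ≠ 0 := ofReal_ne_zero.2 Real.pi_ne_zero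
  exact mul_left_cancel₀ hpi (by linear_combination -hderiv)

theorem exp_mul_I_mem_slitPlane (hθ : θ ∈ Ioo (-π) π) : exp (θ * I) ∈ slitPlane := by
  rw [mem_slitPlane_iff_arg, arg_exp_mul_I, (toIocMod_eq_self Real.two_pi_pos).2]
  · exact ⟨hθ.2.ne, exp_ne_zero _⟩
  · exact ⟨hθ.1, by linarith [hθ.2]⟩

theorem inv_ofReal_add_exp_mul_inv (t : ℝ) :
    ((t : ℂ) + exp (θ * I))⁻¹ * ((t : ℂ) + exp ((-θ : ℝ) * I))⁻¹ =
      ((t ^ 2 + 2 * Real.cos θ * t + 1 : ℝ) : ℂ)⁻¹ := by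
  rw [← mul_inv, exp_ofReal_mul_I, exp_ofReal_mul_I, Real.cos_neg, Real.sin_neg]
  have hsq : (Real.sin θ : ℂ) ^ 2 + (Real.cos θ : ℂ) ^ 2 = 1 := by
    exact_mod_cast Real.sin_sq_add_cos_sq θ
  congr 1
  push_cast at hsq ⊢
  linear_combination hsq - sin θ ^ 2 * I_sq

theorem exp_neg_mul_I_sub_exp_mul_I (x : ℂ) : exp (-x * I) - exp (x * I) = -2 * I * sin x := by
  rw [exp_mul_I, exp_mul_I, cos_neg, sin_neg]
  ring

theorem sin_ofReal_ne_zero (hθ : θ ∈ Ioo (-π) π) (hθ₀ : θ ≠ 0) : sin θ ≠ 0 := by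
  exact_mod_cast (Real.sin_eq_zero_iff_of_lt_of_lt hθ.1 hθ.2).not.2 hθ₀

theorem log_exp_ofReal_mul_I (hθ : θ ∈ Ioo (-π) π) : log (exp (θ * I)) = θ * I :=
  log_exp (by simpa using hθ.1) (by simpa using hθ.2.le)

theorem exp_ofReal_mul_I_cpow (hθ : θ ∈ Ioo (-π) π) (x : ℂ) :
    exp (θ * I) ^ x = exp (x * θ * I) := by
  rw [cpow_def_of_ne_zero (exp_ne_zero _), log_exp_ofReal_mul_I hθ, mul_comm, mul_assoc]

theorem mellin_inv_sq_add_two_mul_cos_one (hθ : θ ∈ Ioo (-π) π) (hθ₀ : θ ≠ 0) :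
    mellin (fun t : ℝ ↦ ((t ^ 2 + 2 * Real.cos θ * t + 1 : ℝ) : ℂ)⁻¹) 1 = θ / sin θ := by
  have hneg : -θ ∈ Ioo (-π) π := ⟨neg_lt_neg hθ.2, neg_lt.1 hθ.1⟩
  have hsin := sin_ofReal_ne_zero hθ hθ₀
  have h := sub_mul_mellin_inv_ofReal_add_mul_inv_one
    (exp_mul_I_mem_slitPlane hθ) (exp_mul_I_mem_slitPlane hneg)
  simp only [inv_ofReal_add_exp_mul_inv] at h
  rw [log_exp_ofReal_mul_I hθ, log_exp_ofReal_mul_I hneg, ofReal_neg,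
    exp_neg_mul_I_sub_exp_mul_I] at h
  rw [eq_div_iff hsin]
  exact mul_left_cancel₀ (mul_ne_zero two_ne_zero I_ne_zero) (by linear_combination -h)

theorem mellin_inv_sq_add_two_mul_cos (hθ : θ ∈ Ioo (-π) π) (hθ₀ : θ ≠ 0) {x : ℂ}
    (hx₀ : x ≠ 0) (hx : |x.re| < 1) :
    mellin (fun t : ℝ ↦ ((t ^ 2 + 2 * Real.cos θ * t + 1 : ℝ) : ℂ)⁻¹) (1 + x) =
      π / sin θ * (sin (x * θ) / sin (x * π)) := by
  have hneg : -θ ∈ Ioo (-π) π := ⟨neg_lt_neg hθ.2, neg_lt.1 hθ.1⟩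
  have hsin := sin_ofReal_ne_zero hθ hθ₀
  have hsin' : sin (x * π) ≠ 0 := by
    simpa only [mul_comm] using sin_pi_mul_ne_zero_of_abs_re_lt_one hx₀ hx
  have h := sin_mul_mellin_inv_ofReal_add_mul_inv (s := 1 + x) (exp_mul_I_mem_slitPlane hθ)
    (exp_mul_I_mem_slitPlane hneg) (by rw [add_re, one_re]; linarith [(abs_lt.1 hx).1])
    (by rw [add_re, one_re]; linarith [(abs_lt.1 hx).2])
  simp only [inv_ofReal_add_exp_mul_inv] at h
  have hpow : exp (θ * I) ^ x - exp ((-θ : ℝ) * I) ^ x = 2 * I * sin (x * θ) := by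
    rw [exp_ofReal_mul_I_cpow hθ, exp_ofReal_mul_I_cpow hneg, ofReal_neg, mul_neg]
    linear_combination -exp_neg_mul_I_sub_exp_mul_I (x * θ)
  rw [add_sub_cancel_left, hpow, mul_add, mul_one, add_comm, sin_add_pi, ofReal_neg,
    exp_neg_mul_I_sub_exp_mul_I, mul_comm _ x] at h
  rw [div_mul_div_comm, eq_div_iff (mul_ne_zero hsin hsin')]
  exact mul_left_cancel₀ (mul_ne_zero two_ne_zero I_ne_zero) (by linear_combination h)

theorem ofReal_integral_rpow_neg_div_eq_mellin (b ε : ℝ) {α : ℝ} (hα : 0 < α) :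
    ((∫ s in Ioi (0 : ℝ), s ^ (-ε) / (s ^ α + b + s ^ (-α)) : ℝ) : ℂ) =
      (α : ℂ)⁻¹ * mellin (fun t : ℝ ↦ ((t ^ 2 + b * t + 1 : ℝ) : ℂ)⁻¹)
        (1 + ((1 - ε) / α : ℝ)) := by
  have hexp : (1 + ((1 - ε) / α : ℝ) : ℂ) = ((α + 1 - ε : ℝ) : ℂ) / α := by
    have hα' : (α : ℂ) ≠ 0 := ofReal_ne_zero.2 hα.ne'
    push_cast
    field_simp
    ring
  have hcomp := mellin_comp_rpow (fun t : ℝ ↦ ((t ^ 2 + b * t + 1 : ℝ) : ℂ)⁻¹)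
    ((α + 1 - ε : ℝ) : ℂ) α
  rw [abs_of_pos hα, real_smul, ofReal_inv] at hcomp
  rw [hexp, ← hcomp, ← integral_complex_ofReal, mellin]
  refine setIntegral_congr_fun measurableSet_Ioi fun s (hs : 0 < s) ↦ ?_
  have hpos : 0 < s ^ α := Real.rpow_pos_of_pos hs α
  have hpow : ((s : ℂ) ^ (((α + 1 - ε : ℝ) : ℂ) - 1)) = ((s ^ α * s ^ (-ε) : ℝ) : ℂ) := by
    rw [← Real.rpow_add hs, ofReal_cpow hs.le]
    congr 1
    push_cast
    ring
  have hden : s ^ α + b + s ^ (-α) = ((s ^ α) ^ 2 + b * s ^ α + 1) / s ^ α := by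
    rw [Real.rpow_neg hs.le, eq_div_iff hpos.ne', add_mul, inv_mul_cancel₀ hpos.ne']
    ring
  rw [hpow, hden, smul_eq_mul, ← ofReal_inv, ← ofReal_mul, div_div_eq_mul_div]
  congr 1
  ring

theorem integral_rpow_neg_one_div (hθ : θ ∈ Ioo (-π) π) (hθ₀ : θ ≠ 0) {α : ℝ}
    (hα : 0 < α) :
    ∫ s in Ioi (0 : ℝ), s ^ (-1 : ℝ) / (s ^ α + 2 * Real.cos θ + s ^ (-α)) =
      θ / (α * Real.sin θ) := by
  refine ofReal_injective ?_
  rw [ofReal_integral_rpow_neg_div_eq_mellin _ _ hα, sub_self, zero_div, ofReal_zero, add_zero,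
    mellin_inv_sq_add_two_mul_cos_one hθ hθ₀]
  push_cast
  field_simp

theorem integral_rpow_neg_div (hθ : θ ∈ Ioo (-π) π) (hθ₀ : θ ≠ 0) {α ε : ℝ}
    (hε₀ : ε ≠ 1) (hε : |ε - 1| < α) :
    ∫ s in Ioi (0 : ℝ), s ^ (-ε) / (s ^ α + 2 * Real.cos θ + s ^ (-α)) =
      π / (α * Real.sin θ) *
        (Real.sin ((1 - ε) * θ / α) / Real.sin ((1 - ε) * π / α)) := by
  have hα : 0 < α := (abs_nonneg _).trans_lt hε
  have hx₀ : (1 - ε) / α ≠ 0 := div_ne_zero (sub_ne_zero.2 hε₀.symm) hα.ne'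
  have hx : |(1 - ε) / α| < 1 := by
    rwa [abs_div, abs_of_pos hα, div_lt_one hα, abs_sub_comm]
  refine ofReal_injective ?_
  rw [ofReal_integral_rpow_neg_div_eq_mellin _ _ hα,
    mellin_inv_sq_add_two_mul_cos hθ hθ₀ (ofReal_ne_zero.2 hx₀) hx, mul_div_right_comm (1 - ε) θ,
    mul_div_right_comm (1 - ε) π]
  push_cast
  field_simp

end MellinTransform

theorem Sfun_zero {θ : ℝ} (hθ : 0 < θ) (hθπ : θ < Real.pi) :
    Sfun θ 0 = Real.pi / ((1 + θ / Real.pi) * Real.sin θ) := by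
  have hpi := Real.pi_pos
  have hα : 1 < 1 + θ / Real.pi := lt_add_of_pos_right 1 (by positivity)
  have hsum : θ / (1 + θ / Real.pi) = Real.pi - Real.pi / (1 + θ / Real.pi) := by
    field_simp
    ring
  have hsin : 0 < Real.sin (Real.pi / (1 + θ / Real.pi)) :=
    Real.sin_pos_of_pos_of_lt_pi (by positivity) (div_lt_self hpi hα)
  rw [Sfun, integral_rpow_neg_div ⟨by linarith, hθπ⟩ hθ.ne' zero_ne_one (by simpa using hα),
    sub_zero, one_mul, one_mul, hsum, Real.sin_pi_sub, div_self hsin.ne', mul_one]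

theorem stmt_17 (θ : ℝ) (hθ : 0 < θ) (hθπ : θ < Real.pi) :
    (∀ ε : ℝ, 0 < |ε - 1| → |ε - 1| < 1 + θ / Real.pi →
      Sfun θ ε = Real.pi / ((1 + θ / Real.pi) * Real.sin θ) *
        (Real.sin ((1 - ε) * θ / (1 + θ / Real.pi)) /
          Real.sin ((1 - ε) * Real.pi / (1 + θ / Real.pi)))) ∧
    Sfun θ 1 = θ / ((1 + θ / Real.pi) * Real.sin θ) ∧
    Sfun θ 1 / Sfun θ 0 = (1 + θ / Real.pi) - 1 ∧
    Sfun θ 1 / Sfun θ 0 = θ / Real.pi := by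
  have hθ' : θ ∈ Set.Ioo (-Real.pi) Real.pi := ⟨by linarith, hθπ⟩
  have hα : 0 < 1 + θ / Real.pi := by positivity
  have hsin : 0 < Real.sin θ := Real.sin_pos_of_pos_of_lt_pi hθ hθπ
  have hone : Sfun θ 1 = θ / ((1 + θ / Real.pi) * Real.sin θ) :=
    integral_rpow_neg_one_div hθ' hθ.ne' hα
  have hratio : Sfun θ 1 / Sfun θ 0 = θ / Real.pi := by
    rw [hone, Sfun_zero hθ hθπ, div_div_div_cancel_right₀ (by positivity)]
  refine ⟨fun ε hε₀ hε ↦ ?_, hone, by rw [hratio, add_sub_cancel_left], hratio⟩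
  exact integral_rpow_neg_div hθ' hθ.ne' (sub_ne_zero.1 (abs_pos.1 hε₀)) hε
end
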